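/- Let n ∈ ℕ, p⃗, q⃗ ∈ [1,∞)^n and α⃗ ∈ ℝⁿ. Then the dual space of Ė^{α⃗,p⃗}_{q⃗}(ℝⁿ) is Ė^{-α⃗,p⃗'}_{q⃗'}(ℝⁿ) in the following sense: (i) for every g ∈ Ė^{-α⃗,p⃗'}_{q⃗'}(ℝⁿ), the linear functional J_g(f) := ∫_{ℝⁿ} f(x) g(x) dx is bounded on Ė^{α⃗,p⃗}_{q⃗}(ℝⁿ); (ii) conversely, every continuous linear functional on Ė^{α⃗,p⃗}_{q⃗}(ℝⁿ) equals J_g for a unique g ∈ Ė^{-α⃗,p⃗'}_{q⃗'}(ℝⁿ); moreover, ‖g‖_{Ė^{-α⃗,p⃗'}_{q⃗'}(ℝⁿ)} equals the operator norm of J_g on Ė^{α⃗,p⃗}_{q⃗}(ℝⁿ). -/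

import Mathlib

open MeasureTheory ENNReal Filter

noncomputable section

/-- The dyadic annulus `R_k = (-2^k, 2^k) \ (-2^(k-1), 2^(k-1))` in `ℝ`. -/
def herzRing (k : ℤ) : Set ℝ :=
  Set.Ioo (-(2 : ℝ) ^ k) ((2 : ℝ) ^ k) \ Set.Ioo (-(2 : ℝ) ^ (k - 1)) ((2 : ℝ) ^ (k - 1))

/-- The `L^q` "norm" (valued in `ℝ≥0∞`) of an `ℝ≥0∞`-valued function on a set `s ⊆ ℝ`,
with the usual modification when `q = ∞`. -/
def lqNormOn (q : ℝ≥0∞) (s : Set ℝ) (g : ℝ → ℝ≥0∞) : ℝ≥0∞ :=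
  if q = ∞ then essSup (s.indicator g) volume
  else (∫⁻ x in s, g x ^ q.toReal) ^ (1 / q.toReal)

/-- The `l^p` norm over `ℤ` of an `ℝ≥0∞`-valued sequence, with the usual modification
when `p = ∞`. -/
def lpZNorm (p : ℝ≥0∞) (a : ℤ → ℝ≥0∞) : ℝ≥0∞ :=
  if p = ∞ then ⨆ k, a k
  else (∑' k : ℤ, a k ^ p.toReal) ^ (1 / p.toReal)

/-- The one-dimensional Herz norm `K^{α,p}_q` of an `ℝ≥0∞`-valued function on `ℝ`. -/
def herzNorm1 (α : ℝ) (p q : ℝ≥0∞) (g : ℝ → ℝ≥0∞) : ℝ≥0∞ :=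
  lpZNorm p fun k => ENNReal.ofReal ((2 : ℝ) ^ ((k : ℝ) * α)) * lqNormOn q (herzRing k) g

/-- The mixed-norm Herz norm on `ℝⁿ` of an `ℝ≥0∞`-valued function: the Herz norm
`K^{α_1,p_1}_{q_1}` is applied in the first variable, then `K^{α_2,p_2}_{q_2}` in the
second variable, …, and finally `K^{α_n,p_n}_{q_n}` in the last variable. -/
def mixedHerzNormE : (n : ℕ) → (Fin n → ℝ) → (Fin n → ℝ≥0∞) → (Fin n → ℝ≥0∞) →
    ((Fin n → ℝ) → ℝ≥0∞) → ℝ≥0∞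
  | 0, _, _, _, f => f fun i => i.elim0
  | n + 1, α, p, q, f =>
    herzNorm1 (α (Fin.last n)) (p (Fin.last n)) (q (Fin.last n)) fun xlast =>
      mixedHerzNormE n (Fin.init α) (Fin.init p) (Fin.init q) fun y => f (Fin.snoc y xlast)

/-- The mixed-norm Herz norm `‖f‖_{Ė^{α,p}_q(ℝⁿ)}` of a complex-valued function on `ℝⁿ`. -/
def herzNormC (n : ℕ) (α : Fin n → ℝ) (p q : Fin n → ℝ≥0∞) (f : (Fin n → ℝ) → ℂ) : ℝ≥0∞ :=
  mixedHerzNormE n α p q fun x => (‖f x‖₊ : ℝ≥0∞)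

/-- `I_m = (-2^m, -2^{-m}] ∪ [2^{-m}, 2^m)`. -/
def herzI (m : ℕ) : Set ℝ :=
  Set.Ioc (-(2 : ℝ) ^ (m : ℤ)) (-(2 : ℝ) ^ (-(m : ℤ))) ∪
    Set.Ico ((2 : ℝ) ^ (-(m : ℤ))) ((2 : ℝ) ^ (m : ℤ))

/-- `A_m = I_m^n ⊆ ℝⁿ`. -/
def herzA (n m : ℕ) : Set (Fin n → ℝ) := Set.univ.pi fun _ => herzI m

/-- The class `H(ℝⁿ)` of simple functions built from finitely many pairwise disjoint
parallelepipeds contained in some `A_m`. -/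
def IsHSimple (n : ℕ) (f : (Fin n → ℝ) → ℂ) : Prop :=
  ∃ (m N : ℕ) (a : Fin N → ℂ) (E : Fin N → Fin n → Set ℝ),
    (∀ k i, MeasurableSet (E k i)) ∧
    (∀ k, Set.univ.pi (E k) ⊆ herzA n m) ∧
    (Pairwise fun k l => Disjoint (Set.univ.pi (E k)) (Set.univ.pi (E l))) ∧
    f = fun x => ∑ k, (Set.univ.pi (E k)).indicator (fun _ => a k) x

/-- The Euclidean ball `B(x,r)` in `ℝⁿ`. -/
def eucBall (n : ℕ) (x : Fin n → ℝ) (r : ℝ) : Set (Fin n → ℝ) :=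
  {y | ∑ i, (y i - x i) ^ 2 < r ^ 2}

/-- The (uncentered) maximal operator in the `k`-th variable. -/
def maxVar (n : ℕ) (k : Fin n) (g : (Fin n → ℝ) → ℝ≥0∞) : (Fin n → ℝ) → ℝ≥0∞ :=
  fun x => ⨆ (a : ℝ) (b : ℝ) (_ : x k ∈ Set.Ioo a b),
    (volume (Set.Ioo a b))⁻¹ * ∫⁻ y in Set.Ioo a b, g (Function.update x k y)

/-- The centered Hardy–Littlewood maximal operator on `ℝⁿ`. -/
def centeredMax (n : ℕ) (g : (Fin n → ℝ) → ℝ≥0∞) : (Fin n → ℝ) → ℝ≥0∞ :=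
  fun x => ⨆ (r : ℝ) (_ : 0 < r),
    (volume (eucBall n x r))⁻¹ * ∫⁻ y in eucBall n x r, g y

/-- The composition `M_n ∘ ⋯ ∘ M_1` of the maximal operators in each variable. -/
def iteratedMax (n : ℕ) (g : (Fin n → ℝ) → ℝ≥0∞) : (Fin n → ℝ) → ℝ≥0∞ :=
  (List.ofFn fun k : Fin n => maxVar n k).foldl (fun h F => F h) g

/-- The iterated maximal operator `ℳ_t(f) = [M_n ⋯ M_1(|f|^t)]^{1/t}`. -/
def iterMaxPow (n : ℕ) (t : ℝ) (f : (Fin n → ℝ) → ℂ) : (Fin n → ℝ) → ℝ≥0∞ :=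
  fun x => iteratedMax n (fun y => (‖f y‖₊ : ℝ≥0∞) ^ t) x ^ (1 / t)

/-- The `l^r`-Herz type mixed norm of a sequence of functions on `ℝⁿ`. -/
def herzSeqNorm (n : ℕ) (r : ℝ≥0∞) (α : Fin n → ℝ) (p q : Fin n → ℝ≥0∞)
    (F : ℤ → (Fin n → ℝ) → ℂ) : ℝ≥0∞ :=
  mixedHerzNormE n α p q fun x => lpZNorm r fun j => (‖F j x‖₊ : ℝ≥0∞)

/-- `N` is a ball quasi-Banach function norm on (nonnegative extended-real-valued)
measurable functions on `ℝⁿ`. -/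
def IsBQBFNorm (n : ℕ) (N : ((Fin n → ℝ) → ℝ≥0∞) → ℝ≥0∞) : Prop :=
  (∀ f : (Fin n → ℝ) → ℝ≥0∞, Measurable f → N f = 0 → f =ᵐ[volume] 0) ∧
  (∀ f g : (Fin n → ℝ) → ℝ≥0∞, Measurable f → Measurable g →
    (∀ᵐ x ∂volume, g x ≤ f x) → N g ≤ N f) ∧
  (∀ (fm : ℕ → (Fin n → ℝ) → ℝ≥0∞) (f : (Fin n → ℝ) → ℝ≥0∞),
    (∀ m, Measurable (fm m)) → Measurable f →
    (∀ᵐ x ∂volume, Monotone (fun m => fm m x) ∧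
      Tendsto (fun m => fm m x) atTop (nhds (f x))) →
    Monotone (fun m => N (fm m)) ∧ Tendsto (fun m => N (fm m)) atTop (nhds (N f))) ∧
  (∀ (x : Fin n → ℝ) (r : ℝ), 0 < r →
    N ((eucBall n x r).indicator fun _ => (1 : ℝ≥0∞)) ≠ ∞)

/-- `N` is a ball Banach function norm: a ball quasi-Banach function norm that moreover
satisfies the triangle inequality and locally dominates the `L¹` norm. -/
def IsBallBanachNorm (n : ℕ) (N : ((Fin n → ℝ) → ℝ≥0∞) → ℝ≥0∞) : Prop :=
  IsBQBFNorm n N ∧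
  (∀ f g : (Fin n → ℝ) → ℝ≥0∞, Measurable f → Measurable g → N (f + g) ≤ N f + N g) ∧
  (∀ (x : Fin n → ℝ) (r : ℝ), 0 < r → ∃ C : ℝ≥0∞, 0 < C ∧ C ≠ ∞ ∧
    ∀ f : (Fin n → ℝ) → ℝ≥0∞, Measurable f → (∫⁻ y in eucBall n x r, f y) ≤ C * N f)

/-- The associate (Köthe dual) norm of a function norm `N`. -/
def assocNormOf (n : ℕ) (N : ((Fin n → ℝ) → ℝ≥0∞) → ℝ≥0∞)
    (f : (Fin n → ℝ) → ℝ≥0∞) : ℝ≥0∞ :=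
  ⨆ (g : (Fin n → ℝ) → ℝ≥0∞) (_ : Measurable g) (_ : N g = 1), ∫⁻ x, f x * g x

/-- The `θ`-convexification of a function norm: `‖f‖_{X^θ} = ‖|f|^θ‖_X^{1/θ}`
(here stated with `θ` in place of `1/p`, so `X^{1/p}` is `convexPow n (1/p) N`). -/
def convexPow (n : ℕ) (θ : ℝ) (N : ((Fin n → ℝ) → ℝ≥0∞) → ℝ≥0∞)
    (f : (Fin n → ℝ) → ℝ≥0∞) : ℝ≥0∞ :=
  N (fun x => f x ^ θ) ^ (1 / θ)

/-- The associate space norm of the mixed-norm Herz space, for complex-valued functions. -/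
def herzAssocNormC (n : ℕ) (α : Fin n → ℝ) (p q : Fin n → ℝ≥0∞)
    (f : (Fin n → ℝ) → ℂ) : ℝ≥0∞ :=
  ⨆ (g : (Fin n → ℝ) → ℂ) (_ : Measurable g) (_ : herzNormC n α p q g = 1),
    ∫⁻ x, (‖f x * g x‖₊ : ℝ≥0∞)



structure BF {X : Type} [MeasurableSpace X] (μ : Measure X)
    (ρ ρ' : (X → ℝ≥0∞) → ℝ≥0∞) : Prop where
  mono : ∀ f g : X → ℝ≥0∞, f ≤ᵐ[μ] g → ρ f ≤ ρ g
  hom : ∀ (c : ℝ≥0∞) (f : X → ℝ≥0∞), Measurable f → ρ (fun x => c * f x) ≤ c * ρ f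
  dct : ∀ f : ℕ → X → ℝ≥0∞, (∀ n, Measurable (f n)) → (∀ x, Antitone fun n => f n x) →
    (∀ᵐ x ∂μ, Tendsto (fun n => f n x) atTop (nhds 0)) → ρ (f 0) ≠ ∞ →
    Tendsto (fun n => ρ (f n)) atTop (nhds 0)
  meas : ∀ (Z : Type) [MeasurableSpace Z] (F : Z → X → ℝ≥0∞),
    Measurable (fun t : Z × X => F t.1 t.2) → Measurable fun z => ρ (F z)
  meas' : ∀ (Z : Type) [MeasurableSpace Z] (F : Z → X → ℝ≥0∞),
    Measurable (fun t : Z × X => F t.1 t.2) → Measurable fun z => ρ' (F z)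
  holder : ∀ f g : X → ℝ≥0∞, Measurable f → Measurable g → ∫⁻ x, f x * g x ∂μ ≤ ρ f * ρ' g
  norming : ∀ (Z : Type) [MeasurableSpace Z] (G : Z → X → ℝ≥0∞),
    Measurable (fun t : Z × X => G t.1 t.2) →
    ∃ F : ℕ → Z → X → ℝ≥0∞, (∀ j, Measurable (fun t : Z × X => F j t.1 t.2)) ∧
      (∀ j z, ρ (F j z) ≤ 1) ∧ ∀ z, ρ' (G z) ≤ ⨆ j, ∫⁻ x, F j z x * G z x ∂μ
  wt : ∃ w : X → ℝ≥0∞, Measurable w ∧ (∀ x, w x ≠ 0 ∧ w x ≠ ∞) ∧ ρ w ≤ 1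
  wt' : ∃ w : X → ℝ≥0∞, Measurable w ∧ (∀ x, w x ≠ 0 ∧ w x ≠ ∞) ∧ ρ' w ≤ 1

lemma secm {Z X : Type} [MeasurableSpace Z] [MeasurableSpace X] {F : Z → X → ℝ≥0∞}
    (h : Measurable fun t : Z × X => F t.1 t.2) (z : Z) : Measurable (F z) :=
  h.comp (measurable_prodMk_left (x := z))

lemma mulm {X : Type} [MeasurableSpace X] {f g : X → ℝ≥0∞} (hf : Measurable f)
    (hg : Measurable g) : Measurable fun x => f x * g x := hf.mul hg

namespace BF
variable {X : Type} [MeasurableSpace X] {μ : Measure X} {ρ ρ' : (X → ℝ≥0∞) → ℝ≥0∞}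

lemma norming1 (h : BF μ ρ ρ') (g : X → ℝ≥0∞) (hg : Measurable g) :
    ∃ F : ℕ → X → ℝ≥0∞, (∀ j, Measurable (F j)) ∧
      (∀ j, ρ (F j) ≤ 1) ∧ ρ' g ≤ ⨆ j, ∫⁻ x, F j x * g x ∂μ := by
  obtain ⟨F, h1, h2, h3⟩ := h.norming Unit (fun _ => g) (hg.comp measurable_snd)
  exact ⟨fun j => F j (), fun j => (h1 j).comp (measurable_prodMk_left (x := ())), fun j => h2 j (), h3 ()⟩

lemma le_of_forall (h : BF μ ρ ρ') {g : X → ℝ≥0∞} (hg : Measurable g) {C : ℝ≥0∞}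
    (H : ∀ f, Measurable f → ρ f ≤ 1 → ∫⁻ x, f x * g x ∂μ ≤ C) : ρ' g ≤ C := by
  obtain ⟨F, h1, h2, h3⟩ := h.norming1 g hg
  exact h3.trans (iSup_le fun j => H _ (h1 j) (h2 j))

lemma holder1 (h : BF μ ρ ρ') {f g : X → ℝ≥0∞} (hf : Measurable f) (hg : Measurable g)
    (h1 : ρ f ≤ 1) : ∫⁻ x, f x * g x ∂μ ≤ ρ' g :=
  (h.holder f g hf hg).trans (mul_le_of_le_one_left' h1)

lemma mono' (h : BF μ ρ ρ') {f g : X → ℝ≥0∞} (hf : Measurable f) (hg : Measurable g)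
    (hfg : f ≤ᵐ[μ] g) : ρ' f ≤ ρ' g := by
  refine h.le_of_forall hf fun φ hφ h1 => le_trans ?_ (h.holder1 hφ hg h1)
  refine lintegral_mono_ae ?_
  filter_upwards [hfg] with x hx
  gcongr

lemma hom' (h : BF μ ρ ρ') (c : ℝ≥0∞) (f : X → ℝ≥0∞) (hf : Measurable f) :
    ρ' (fun x => c * f x) ≤ c * ρ' f := by
  refine h.le_of_forall (hf.const_mul c) fun φ hφ h1 => ?_
  have : ∀ x, φ x * (c * f x) = c * (φ x * f x) := fun x => by ring
  simp_rw [this]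
  rw [lintegral_const_mul c (mulm hφ hf)]
  gcongr
  exact h.holder1 hφ hf h1

lemma fatou' (h : BF μ ρ ρ') (f : ℕ → X → ℝ≥0∞) (hf : ∀ n, Measurable (f n))
    (hm : ∀ x, Monotone fun n => f n x) : ρ' (fun x => ⨆ n, f n x) ≤ ⨆ n, ρ' (f n) := by
  refine h.le_of_forall (Measurable.iSup hf) fun φ hφ h1 => ?_
  simp_rw [ENNReal.mul_iSup]
  rw [lintegral_iSup (fun n => mulm hφ (hf n))
    (fun i j hij x => by dsimp; gcongr; exact hm x hij)]
  exact iSup_mono fun n => h.holder1 hφ (hf n) h1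

lemma congr (h : BF μ ρ ρ') {f g : X → ℝ≥0∞} (hfg : f =ᵐ[μ] g) : ρ f = ρ g :=
  le_antisymm (h.mono _ _ hfg.le) (h.mono _ _ hfg.symm.le)

lemma congr' (h : BF μ ρ ρ') {f g : X → ℝ≥0∞} (hf : Measurable f) (hg : Measurable g)
    (hfg : f =ᵐ[μ] g) : ρ' f = ρ' g :=
  le_antisymm (h.mono' hf hg hfg.le) (h.mono' hg hf hfg.symm.le)

lemma ae_lt_top (h : BF μ ρ ρ') {f : X → ℝ≥0∞} (hf : Measurable f) (hfin : ρ f ≠ ∞) :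
    ∀ᵐ x ∂μ, f x < ∞ := by
  obtain ⟨w, hw, hw0, hw1⟩ := h.wt'
  have h1 : ∫⁻ x, f x * w x ∂μ ≠ ∞ :=
    ne_top_of_le_ne_top (ENNReal.mul_ne_top hfin (ne_top_of_le_ne_top one_ne_top hw1))
      (h.holder f w hf hw)
  filter_upwards [MeasureTheory.ae_lt_top (hf.mul hw) h1] with x hx
  rw [lt_top_iff_ne_top]
  intro hx'
  simp [hx', ENNReal.top_mul (hw0 x).1] at hx

lemma ae_lt_top' (h : BF μ ρ ρ') {f : X → ℝ≥0∞} (hf : Measurable f) (hfin : ρ' f ≠ ∞) :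
    ∀ᵐ x ∂μ, f x < ∞ := by
  obtain ⟨w, hw, hw0, hw1⟩ := h.wt
  have h1 : ∫⁻ x, w x * f x ∂μ ≠ ∞ :=
    ne_top_of_le_ne_top (ENNReal.mul_ne_top (ne_top_of_le_ne_top one_ne_top hw1) hfin)
      (h.holder w f hw hf)
  filter_upwards [MeasureTheory.ae_lt_top (hw.mul hf) h1] with x hx
  rw [lt_top_iff_ne_top]
  intro hx'
  simp [hx', ENNReal.mul_top (hw0 x).1] at hx

lemma dct_gen (h : BF μ ρ ρ') (f : ℕ → X → ℝ≥0∞) (F : X → ℝ≥0∞) (hf : ∀ n, Measurable (f n))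
    (hF : ρ F ≠ ∞) (hle : ∀ n x, f n x ≤ F x)
    (ht : ∀ᵐ x ∂μ, Tendsto (fun n => f n x) atTop (nhds 0)) :
    Tendsto (fun n => ρ (f n)) atTop (nhds 0) := by
  have key := h.dct (fun n x => ⨆ m : ℕ, f (n + m) x) (fun n => Measurable.iSup fun m => hf _)
    (fun x i j hij => iSup_le fun m => by
      refine le_iSup_of_le (j - i + m) ?_
      rw [show i + (j - i + m) = j + m by omega]) ?_ ?_
  · refine tendsto_of_tendsto_of_tendsto_of_le_of_le tendsto_const_nhds key
      (fun n => zero_le) (fun n => h.mono _ _ (ae_of_all _ fun x => ?_))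
    exact le_iSup_of_le 0 (by simp)
  · filter_upwards [ht] with x hx
    rw [ENNReal.tendsto_atTop_zero] at hx ⊢
    intro ε hε
    obtain ⟨N, hN⟩ := hx ε hε
    exact ⟨N, fun n hn => iSup_le fun m => hN _ (by omega)⟩
  · exact ne_top_of_le_ne_top hF (h.mono _ _ (ae_of_all _ fun x => iSup_le fun m => hle _ _))

/-- transport along a measure preserving map with an a.e. section -/
lemma transport {X' : Type} [MeasurableSpace X'] {μ' : Measure X'}
    {σ σ' : (X' → ℝ≥0∞) → ℝ≥0∞} (h : BF μ' σ σ') (π : X' → X) (e : X → X')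
    (hπ : MeasurePreserving π μ' μ) (he : Measurable e) (hse : ∀ᵐ x ∂μ', e (π x) = x) :
    BF μ (fun f => σ (f ∘ π)) (fun f => σ' (f ∘ π)) where
  mono f g hfg := h.mono _ _ (hπ.quasiMeasurePreserving.ae hfg)
  hom c f hf := h.hom c _ (hf.comp hπ.measurable)
  dct f hf hm ht h0 := h.dct (fun n => f n ∘ π) (fun n => (hf n).comp hπ.measurable)
    (fun x => hm _) (hπ.quasiMeasurePreserving.ae ht) h0
  meas Z _ F hF := h.meas Z (fun z => F z ∘ π)
    (hF.comp (measurable_fst.prodMk (hπ.measurable.comp measurable_snd)))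
  meas' Z _ F hF := h.meas' Z (fun z => F z ∘ π)
    (hF.comp (measurable_fst.prodMk (hπ.measurable.comp measurable_snd)))
  holder f g hf hg := by
    have := h.holder _ _ (hf.comp hπ.measurable) (hg.comp hπ.measurable)
    rwa [← hπ.lintegral_comp (mulm hf hg)]
  norming Z _ G hG := by
    obtain ⟨F, h1, h2, h3⟩ := h.norming Z (fun z => G z ∘ π)
      (hG.comp (measurable_fst.prodMk (hπ.measurable.comp measurable_snd)))
    have hm : ∀ j, Measurable (fun t : Z × X => F j t.1 (e t.2)) := fun j =>
      (h1 j).comp (measurable_fst.prodMk (he.comp measurable_snd))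
    refine ⟨fun j z x => F j z (e x), hm, fun j z => ?_, fun z => ?_⟩
    · refine le_trans (h.mono _ _ ?_) (h2 j z)
      filter_upwards [hse] with x hx
      simp [hx]
    · refine (h3 z).trans (iSup_mono fun j => ?_)
      rw [← hπ.lintegral_comp (mulm (secm (F := fun z x => F j z (e x)) (hm j) z) (secm hG z))]
      refine lintegral_mono_ae ?_
      filter_upwards [hse] with x hx
      simp [hx]
  wt := by
    obtain ⟨w, h1, h2, h3⟩ := h.wt
    refine ⟨w ∘ e, h1.comp he, fun x => h2 _, le_trans (h.mono _ _ ?_) h3⟩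
    filter_upwards [hse] with x hx
    simp [hx]
  wt' := by
    obtain ⟨w, h1, h2, h3⟩ := h.wt'
    refine ⟨w ∘ e, h1.comp he, fun x => h2 _,
      le_trans (h.mono' ((h1.comp he).comp hπ.measurable) h1 ?_) h3⟩
    filter_upwards [hse] with x hx
    simp [hx]

/-- rescaling -/
lemma scale (h : BF μ ρ ρ') (c d : ℝ≥0∞) (hc : c ≠ 0) (hc' : c ≠ ∞) (hd : d = c⁻¹) :
    BF μ (fun f => c * ρ f) (fun f => d * ρ' f) := by
  have hcd : c * d = 1 := by rw [hd, ENNReal.mul_inv_cancel hc hc']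
  have hd' : d ≠ 0 := by intro h; simp [h] at hcd
  have hd'' : d ≠ ∞ := by simp [hd, hc]
  exact
  { mono := fun f g hfg => by gcongr; exact h.mono _ _ hfg
    hom := fun a f hf => by
      rw [mul_left_comm]
      gcongr
      exact h.hom a f hf
    dct := fun f hf hm ht h0 => by
      have := h.dct f hf hm ht (fun h' => h0 (by simp [h', ENNReal.mul_top hc]))
      simpa using ENNReal.Tendsto.const_mul this (Or.inr hc')
    meas := fun Z _ F hF => (h.meas Z F hF).const_mul _
    meas' := fun Z _ F hF => (h.meas' Z F hF).const_mul _
    holder := fun f g hf hg => by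
      refine (h.holder f g hf hg).trans_eq ?_
      rw [mul_mul_mul_comm, hcd, one_mul]
    norming := fun Z _ G hG => by
      obtain ⟨F, h1, h2, h3⟩ := h.norming Z G hG
      refine ⟨fun j z x => d * F j z x, fun j => (h1 j).const_mul d, fun j z => ?_, fun z => ?_⟩
      · calc c * ρ (fun x => d * F j z x) ≤ c * (d * ρ (F j z)) := by
              gcongr; exact h.hom d _ ((h1 j).comp (measurable_prodMk_left (x := z)))
          _ = ρ (F j z) := by rw [← mul_assoc, hcd, one_mul]
          _ ≤ 1 := h2 j z
      · have : ∀ j x, d * F j z x * G z x = d * (F j z x * G z x) := fun j x => by ring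
        simp_rw [this]
        have h4 : ∀ j, ∫⁻ x, d * (F j z x * G z x) ∂μ = d * ∫⁻ x, F j z x * G z x ∂μ := fun j =>
          lintegral_const_mul d (mulm (secm (h1 j) z) (secm hG z))
        simp_rw [h4]
        rw [← ENNReal.mul_iSup]
        gcongr
        exact h3 z
    wt := by
      obtain ⟨w, h1, h2, h3⟩ := h.wt
      refine ⟨fun x => d * w x, h1.const_mul d, fun x => ⟨mul_ne_zero hd' (h2 x).1,
        ENNReal.mul_ne_top hd'' (h2 x).2⟩, ?_⟩
      calc c * ρ (fun x => d * w x) ≤ c * (d * ρ w) := by gcongr; exact h.hom d _ h1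
        _ = ρ w := by rw [← mul_assoc, hcd, one_mul]
        _ ≤ 1 := h3
    wt' := by
      obtain ⟨w, h1, h2, h3⟩ := h.wt'
      refine ⟨fun x => c * w x, h1.const_mul c, fun x => ⟨mul_ne_zero hc (h2 x).1,
        ENNReal.mul_ne_top hc' (h2 x).2⟩, ?_⟩
      calc d * ρ' (fun x => c * w x) ≤ d * (c * ρ' w) := by gcongr; exact h.hom' c _ h1
        _ = ρ' w := by rw [← mul_assoc, mul_comm d, hcd, one_mul]
        _ ≤ 1 := h3 }

end BF



structure JF {Y X : Type} [MeasurableSpace Y] [MeasurableSpace X] (κ : ProbabilityTheory.Kernel Y X)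
    (ρ ρ' : Y → (X → ℝ≥0∞) → ℝ≥0∞) : Prop where
  bf : ∀ y, BF (κ y) (ρ y) (ρ' y)
  meas : ∀ (Z : Type) [MeasurableSpace Z] (F : Z → Y → X → ℝ≥0∞),
    Measurable (fun t : (Z × Y) × X => F t.1.1 t.1.2 t.2) →
      Measurable fun t : Z × Y => ρ t.2 (F t.1 t.2)
  meas' : ∀ (Z : Type) [MeasurableSpace Z] (F : Z → Y → X → ℝ≥0∞),
    Measurable (fun t : (Z × Y) × X => F t.1.1 t.1.2 t.2) →
      Measurable fun t : Z × Y => ρ' t.2 (F t.1 t.2)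
  norming : ∀ (Z : Type) [MeasurableSpace Z] (G : Z → Y → X → ℝ≥0∞),
    Measurable (fun t : (Z × Y) × X => G t.1.1 t.1.2 t.2) →
    ∃ F : ℕ → Z → Y → X → ℝ≥0∞,
      (∀ j, Measurable (fun t : (Z × Y) × X => F j t.1.1 t.1.2 t.2)) ∧
      (∀ j z y, ρ y (F j z y) ≤ 1) ∧
      ∀ z y, ρ' y (G z y) ≤ ⨆ j, ∫⁻ x, F j z y x * G z y x ∂(κ y)
  wt : ∃ w : Y → X → ℝ≥0∞, Measurable (fun t : Y × X => w t.1 t.2) ∧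
    (∀ y x, w y x ≠ 0 ∧ w y x ≠ ∞) ∧ ∀ y, ρ y (w y) ≤ 1
  wt' : ∃ w : Y → X → ℝ≥0∞, Measurable (fun t : Y × X => w t.1 t.2) ∧
    (∀ y x, w y x ≠ 0 ∧ w y x ≠ ∞) ∧ ∀ y, ρ' y (w y) ≤ 1

namespace JF
variable {Y X : Type} [MeasurableSpace Y] [MeasurableSpace X]

lemma const {μ : Measure X} {ρ ρ' : (X → ℝ≥0∞) → ℝ≥0∞} (h : BF μ ρ ρ') :
    JF (ProbabilityTheory.Kernel.const Y μ) (fun _ => ρ) (fun _ => ρ') where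
  bf y := h
  meas Z _ F hF := h.meas (Z × Y) (fun t => F t.1 t.2) hF
  meas' Z _ F hF := h.meas' (Z × Y) (fun t => F t.1 t.2) hF
  norming Z _ G hG := by
    obtain ⟨F, h1, h2, h3⟩ := h.norming (Z × Y) (fun t => G t.1 t.2) hG
    exact ⟨fun j z y => F j (z, y), h1, fun j z y => h2 _ _, fun z y => h3 (z, y)⟩
  wt := by
    obtain ⟨w, h1, h2, h3⟩ := h.wt
    exact ⟨fun _ => w, h1.comp measurable_snd, fun _ => h2, fun _ => h3⟩
  wt' := by
    obtain ⟨w, h1, h2, h3⟩ := h.wt'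
    exact ⟨fun _ => w, h1.comp measurable_snd, fun _ => h2, fun _ => h3⟩

lemma mid_countable {Z : Type} [MeasurableSpace Z] [Countable Y] [MeasurableSingletonClass Y]
    {F : Z → Y → X → ℝ≥0∞} (h : ∀ y, Measurable fun t : Z × X => F t.1 y t.2) :
    Measurable (fun t : (Z × Y) × X => F t.1.1 t.1.2 t.2) := by
  have h1 : Measurable (fun t : (Z × X) × Y => F t.1.1 t.2 t.1.2) :=
    measurable_from_prod_countable_left h
  exact h1.comp (g := fun t : (Z × X) × Y => F t.1.1 t.2 t.1.2)
    (f := fun t : (Z × Y) × X => ((t.1.1, t.2), t.1.2)) (by fun_prop)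

lemma of_countable [Countable Y] [MeasurableSingletonClass Y]
    {κ : ProbabilityTheory.Kernel Y X} {ρ ρ' : Y → (X → ℝ≥0∞) → ℝ≥0∞}
    (h : ∀ y, BF (κ y) (ρ y) (ρ' y)) : JF κ ρ ρ' where
  bf := h
  meas Z _ F hF := measurable_from_prod_countable_left fun y =>
    (h y).meas Z (fun z => F z y) (hF.comp
      (f := fun t : Z × X => ((t.1, y), t.2)) (by fun_prop))
  meas' Z _ F hF := measurable_from_prod_countable_left fun y =>
    (h y).meas' Z (fun z => F z y) (hF.comp
      (f := fun t : Z × X => ((t.1, y), t.2)) (by fun_prop))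
  norming Z _ G hG := by
    choose F h1 h2 h3 using fun y => (h y).norming Z (fun z => G z y) (hG.comp
      (f := fun t : Z × X => ((t.1, y), t.2)) (by fun_prop))
    refine ⟨fun j z y => F y j z, fun j => ?_, fun j z y => h2 y j z, fun z y => h3 y z⟩
    exact mid_countable (F := fun z y => F y j z) fun y => h1 y j
  wt := by
    choose w h1 h2 h3 using fun y => (h y).wt
    exact ⟨w, measurable_from_prod_countable_right h1, h2, h3⟩
  wt' := by
    choose w h1 h2 h3 using fun y => (h y).wt'
    exact ⟨w, measurable_from_prod_countable_right h1, h2, h3⟩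

variable {κ : ProbabilityTheory.Kernel Y X} [ProbabilityTheory.IsSFiniteKernel κ]
  {ρ ρ' : Y → (X → ℝ≥0∞) → ℝ≥0∞}

lemma meas_lint {Z : Type} [MeasurableSpace Z] {F : Z → Y → X → ℝ≥0∞}
    (hF : Measurable (fun t : (Z × Y) × X => F t.1.1 t.1.2 t.2)) :
    Measurable fun t : Z × Y => ∫⁻ x, F t.1 t.2 x ∂(κ t.2) := by
  have := hF.lintegral_kernel_prod_right' (κ := ProbabilityTheory.Kernel.prodMkLeft Z κ)
  simpa using this

lemma norming_mono (h : JF κ ρ ρ') (Z : Type) [MeasurableSpace Z] (G : Z → Y → X → ℝ≥0∞)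
    (hG : Measurable (fun t : (Z × Y) × X => G t.1.1 t.1.2 t.2)) :
    ∃ F : ℕ → Z → Y → X → ℝ≥0∞,
      (∀ j, Measurable (fun t : (Z × Y) × X => F j t.1.1 t.1.2 t.2)) ∧
      (∀ j z y, ρ y (F j z y) ≤ 1) ∧
      (∀ z y, Monotone fun j => ∫⁻ x, F j z y x * G z y x ∂(κ y)) ∧
      ∀ z y, ρ' y (G z y) ≤ ⨆ j, ∫⁻ x, F j z y x * G z y x ∂(κ y) := by
  obtain ⟨F, h1, h2, h3⟩ := h.norming Z G hG
  classical
  let I : (Z → Y → X → ℝ≥0∞) → Z → Y → ℝ≥0∞ := fun F z y => ∫⁻ x, F z y x * G z y x ∂(κ y)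
  let E : ℕ → Z → Y → X → ℝ≥0∞ := fun j => Nat.rec (F 0)
    (fun j E z y => if I E z y ≤ I (F (j+1)) z y then F (j+1) z y else E z y) j
  have hE0 : E 0 = F 0 := rfl
  have hE : ∀ j z y, E (j+1) z y =
    if I (E j) z y ≤ I (F (j+1)) z y then F (j+1) z y else E j z y := fun j z y => rfl
  have hI : ∀ F : Z → Y → X → ℝ≥0∞, Measurable (fun t : (Z × Y) × X => F t.1.1 t.1.2 t.2) →
      Measurable (fun t : Z × Y => I F t.1 t.2) := fun F hF =>
    meas_lint (F := fun z y x => F z y x * G z y x) (mulm hF hG)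
  have hIle : ∀ j z y, I (E j) z y ≤ I (E (j+1)) z y ∧ I (F (j+1)) z y ≤ I (E (j+1)) z y := by
    intro j z y
    have : I (E (j+1)) z y = if I (E j) z y ≤ I (F (j+1)) z y then I (F (j+1)) z y
        else I (E j) z y := by
      simp only [I, hE]
      split_ifs <;> rfl
    rw [this]
    split_ifs with hh
    · exact ⟨hh, le_rfl⟩
    · exact ⟨le_rfl, (not_le.1 hh).le⟩
  refine ⟨E, ?_, ?_, ?_, ?_⟩
  · intro j
    induction j with
    | zero => exact h1 0
    | succ j ih =>
      simp only [hE]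
      have : Measurable (fun t : (Z × Y) × X =>
        if I (E j) t.1.1 t.1.2 ≤ I (F (j+1)) t.1.1 t.1.2 then F (j+1) t.1.1 t.1.2 t.2
          else E j t.1.1 t.1.2 t.2) :=
        Measurable.ite (measurableSet_le ((hI _ ih).comp measurable_fst)
          ((hI _ (h1 (j+1))).comp measurable_fst)) (h1 _) ih
      convert this using 2 with t
      split_ifs <;> rfl
  · intro j z y
    induction j with
    | zero => exact h2 0 z y
    | succ j ih =>
      rw [hE]
      split_ifs
      · exact h2 _ _ _
      · exact ih
  · intro z y
    exact monotone_nat_of_le_succ fun j => (hIle j z y).1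
  · intro z y
    refine (h3 z y).trans (iSup_mono fun j => ?_)
    cases j with
    | zero => exact le_rfl
    | succ j => exact (hIle j z y).2

lemma comp (h : JF κ ρ ρ') {ν : Measure Y} [SFinite ν] {σ σ' : (Y → ℝ≥0∞) → ℝ≥0∞}
    (hν : BF ν σ σ') :
    BF (ν.compProd κ) (fun f => σ fun y => ρ y fun x => f (y, x))
      (fun f => σ' fun y => ρ' y fun x => f (y, x)) := by
  have mf : ∀ {f : Y × X → ℝ≥0∞}, Measurable f → ∀ y, Measurable fun x => f (y, x) :=
    fun hf y => hf.comp measurable_prodMk_left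
  have mr : ∀ {f : Y × X → ℝ≥0∞}, Measurable f → Measurable fun y => ρ y fun x => f (y, x) :=
    fun {f} hf => (h.meas Unit (fun _ y x => f (y, x)) (hf.comp
      (f := fun t : (Unit × Y) × X => (t.1.2, t.2)) (by fun_prop))).comp
      (measurable_prodMk_left (x := ()))
  have mr' : ∀ {f : Y × X → ℝ≥0∞}, Measurable f → Measurable fun y => ρ' y fun x => f (y, x) :=
    fun {f} hf => (h.meas' Unit (fun _ y x => f (y, x)) (hf.comp
      (f := fun t : (Unit × Y) × X => (t.1.2, t.2)) (by fun_prop))).comp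
      (measurable_prodMk_left (x := ()))
  exact
  { mono := fun f g hfg => by
      refine hν.mono _ _ ?_
      filter_upwards [Measure.ae_ae_of_ae_compProd hfg] with y hy
      exact (h.bf y).mono _ _ hy
    hom := fun c f hf => by
      refine le_trans (hν.mono _ (fun y => c * ρ y fun x => f (y, x)) (ae_of_all _ fun y => ?_))
        (hν.hom c _ (mr hf))
      exact (h.bf y).hom c _ (mf hf y)
    dct := fun f hf hm ht h0 => by
      refine hν.dct (fun n y => ρ y fun x => f n (y, x)) (fun n => mr (hf n)) (fun y i j hij => ?_) ?_ h0
      · exact (h.bf y).mono _ _ (ae_of_all _ fun x => hm (y, x) hij)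
      · filter_upwards [Measure.ae_ae_of_ae_compProd ht, hν.ae_lt_top (mr (hf 0)) h0] with y hy hy0
        exact (h.bf y).dct (fun n x => f n (y, x)) (fun n => mf (hf n) y) (fun x => hm _) hy hy0.ne
    meas := fun Z _ F hF => by
      refine hν.meas Z (fun z y => ρ y fun x => F z (y, x)) (h.meas Z (fun z y x => F z (y, x)) ?_)
      exact hF.comp (f := fun t : (Z × Y) × X => (t.1.1, (t.1.2, t.2))) (by fun_prop)
    meas' := fun Z _ F hF => by
      refine hν.meas' Z (fun z y => ρ' y fun x => F z (y, x)) (h.meas' Z (fun z y x => F z (y, x)) ?_)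
      exact hF.comp (f := fun t : (Z × Y) × X => (t.1.1, (t.1.2, t.2))) (by fun_prop)
    holder := fun f g hf hg => by
      rw [Measure.lintegral_compProd (mulm hf hg)]
      refine le_trans (lintegral_mono fun y => ?_) (hν.holder _ _ (mr hf) (mr' hg))
      exact (h.bf y).holder _ _ (mf hf y) (mf hg y)
    norming := fun Z _ G hG => by
      have hG' : Measurable (fun t : (Z × Y) × X => G t.1.1 (t.1.2, t.2)) :=
        hG.comp (f := fun t : (Z × Y) × X => (t.1.1, (t.1.2, t.2))) (by fun_prop)
      obtain ⟨F, h1, h2, h3, h4⟩ := h.norming_mono Z (fun z y x => G z (y, x)) hG'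
      let H : ℕ → Z → Y → ℝ≥0∞ := fun j z y => ∫⁻ x, F j z y x * G z (y, x) ∂(κ y)
      have hH : ∀ j, Measurable fun t : Z × Y => H j t.1 t.2 := fun j =>
        meas_lint (F := fun z y x => F j z y x * G z (y, x)) (mulm (h1 j) hG')
      choose Φ k1 k2 k3 using fun j => hν.norming Z (H j) (hH j)
      have mF : ∀ i j, Measurable fun t : Z × Y × X => Φ j i t.1 t.2.1 * F j t.1 t.2.1 t.2.2 := by
        intro i j
        refine mulm ((k1 j i).comp (f := fun t : Z × Y × X => (t.1, t.2.1)) (by fun_prop)) ?_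
        exact (h1 j).comp (f := fun t : Z × Y × X => ((t.1, t.2.1), t.2.2)) (by fun_prop)
      have m1 : ∀ j z y, Measurable (F j z y) := fun j z y =>
        secm (F := fun t : Z × Y => F j t.1 t.2) (h1 j) (z, y)
      have m2 : ∀ z y, Measurable (fun x => G z (y, x)) := fun z y =>
        secm (F := fun t : Z × Y => fun x => G t.1 (t.2, x)) hG' (z, y)
      refine ⟨fun m z t => Φ m.unpair.2 m.unpair.1 z t.1 * F m.unpair.2 z t.1 t.2,
        fun m => mF _ _, fun m z => ?_, fun z => ?_⟩
      · refine le_trans (hν.mono _ _ (ae_of_all _ fun y => ?_)) (k2 m.unpair.2 m.unpair.1 z)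
        refine ((h.bf y).hom (Φ m.unpair.2 m.unpair.1 z y) (F m.unpair.2 z y) (m1 _ _ _)).trans ?_
        exact mul_le_of_le_one_right' (h2 _ _ _)
      · calc σ' (fun y => ρ' y fun x => G z (y, x)) ≤ σ' (fun y => ⨆ j, H j z y) := by
              refine hν.mono' (mr' (secm hG z)) (Measurable.iSup fun j => secm (hH j) z) ?_
              exact ae_of_all _ fun y => h4 z y
          _ ≤ ⨆ j, σ' (H j z) := hν.fatou' _ (fun j => secm (hH j) z) (h3 z)
          _ ≤ _ := iSup_le fun j => (k3 j z).trans (iSup_le fun i => ?_)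
        refine le_iSup_of_le (Nat.pair i j) ?_
        simp only [Nat.unpair_pair]
        rw [Measure.lintegral_compProd (mulm (secm (F := fun z (t : Y × X) =>
          Φ j i z t.1 * F j z t.1 t.2) (mF i j) z) (secm hG z))]
        refine lintegral_mono fun y => ?_
        simp_rw [mul_assoc]
        rw [lintegral_const_mul _ (mulm (m1 j z y) (m2 z y))]
    wt := by
      obtain ⟨w, h1, h2, h3⟩ := h.wt
      obtain ⟨v, k1, k2, k3⟩ := hν.wt
      refine ⟨fun t => v t.1 * w t.1 t.2, mulm (k1.comp measurable_fst) h1, fun t =>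
        ⟨mul_ne_zero (k2 _).1 (h2 _ _).1, ENNReal.mul_ne_top (k2 _).2 (h2 _ _).2⟩, ?_⟩
      refine le_trans (hν.mono _ _ (ae_of_all _ fun y => ?_)) k3
      refine ((h.bf y).hom (v y) _ (secm h1 y)).trans ?_
      exact mul_le_of_le_one_right' (h3 _)
    wt' := by
      obtain ⟨w, h1, h2, h3⟩ := h.wt'
      obtain ⟨v, k1, k2, k3⟩ := hν.wt'
      have mm : Measurable fun t : Y × X => v t.1 * w t.1 t.2 := mulm (k1.comp measurable_fst) h1
      refine ⟨fun t => v t.1 * w t.1 t.2, mm, fun t =>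
        ⟨mul_ne_zero (k2 _).1 (h2 _ _).1, ENNReal.mul_ne_top (k2 _).2 (h2 _ _).2⟩, ?_⟩
      refine le_trans (hν.mono' (mr' mm) k1 (ae_of_all _ fun y => ?_)) k3
      refine ((h.bf y).hom' (v y) _ (secm h1 y)).trans ?_
      exact mul_le_of_le_one_right' (h3 _) }

end JF



def lqn {X : Type} [MeasurableSpace X] (r : ℝ) (μ : Measure X) (g : X → ℝ≥0∞) : ℝ≥0∞ :=
  (∫⁻ x, g x ^ r ∂μ) ^ (1 / r)

section lq
variable {X : Type} [MeasurableSpace X] {μ : Measure X}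

lemma lqn_mono {r : ℝ} (hr : 0 < r) (f g : X → ℝ≥0∞) (h : f ≤ᵐ[μ] g) :
    lqn r μ f ≤ lqn r μ g := by
  unfold lqn
  refine ENNReal.rpow_le_rpow (lintegral_mono_ae ?_) (by positivity)
  filter_upwards [h] with x hx
  exact ENNReal.rpow_le_rpow hx hr.le

lemma lqn_hom {r : ℝ} (hr : 0 < r) (c : ℝ≥0∞) (f : X → ℝ≥0∞) (hf : Measurable f) :
    lqn r μ (fun x => c * f x) ≤ c * lqn r μ f := by
  unfold lqn
  simp_rw [ENNReal.mul_rpow_of_nonneg _ _ hr.le]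
  rw [lintegral_const_mul _ (hf.pow_const r), ENNReal.mul_rpow_of_nonneg _ _ (by positivity),
    ← ENNReal.rpow_mul, mul_one_div_cancel hr.ne', ENNReal.rpow_one]

lemma tendsto_rpow_zero {r : ℝ} (hr : 0 < r) {a : ℕ → ℝ≥0∞} (h : Tendsto a atTop (nhds 0)) :
    Tendsto (fun n => a n ^ r) atTop (nhds 0) := by
  have := (ENNReal.continuous_rpow_const (y := r)).tendsto 0
  rw [ENNReal.zero_rpow_of_pos hr] at this
  exact this.comp h

lemma lqn_dct {r : ℝ} (hr : 0 < r) (f : ℕ → X → ℝ≥0∞) (hf : ∀ n, Measurable (f n))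
    (hm : ∀ x, Antitone fun n => f n x)
    (ht : ∀ᵐ x ∂μ, Tendsto (fun n => f n x) atTop (nhds 0)) (h0 : lqn r μ (f 0) ≠ ∞) :
    Tendsto (fun n => lqn r μ (f n)) atTop (nhds 0) := by
  refine tendsto_rpow_zero (by positivity) ?_
  have := lintegral_tendsto_of_tendsto_of_antitone (μ := μ) (f := fun n x => f n x ^ r) (F := fun _ => 0)
    (fun n => ((hf n).pow_const r).aemeasurable)
    (ae_of_all _ fun x i j hij => ENNReal.rpow_le_rpow (hm x hij) hr.le)
    (fun h => h0 (by
      unfold lqn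
      rw [h, ENNReal.top_rpow_of_pos (by positivity)])) (by
      filter_upwards [ht] with x hx
      exact tendsto_rpow_zero hr hx)
  simpa using this

lemma lqn_meas [SFinite μ] {r : ℝ} (Z : Type) [MeasurableSpace Z] (F : Z → X → ℝ≥0∞)
    (hF : Measurable (fun t : Z × X => F t.1 t.2)) : Measurable fun z => lqn r μ (F z) :=
  (Measurable.lintegral_prod_right' (hF.pow_const r)).pow_const _

lemma lqn_wt [SigmaFinite μ] {r : ℝ} (hr : 0 < r) :
    ∃ w : X → ℝ≥0∞, Measurable w ∧ (∀ x, w x ≠ 0 ∧ w x ≠ ∞) ∧ lqn r μ w ≤ 1 := by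
  obtain ⟨w, h1, h2, h3⟩ := exists_pos_lintegral_lt_of_sigmaFinite μ (ε := 1) one_ne_zero
  refine ⟨fun x => (w x : ℝ≥0∞) ^ (1 / r), (h2.coe_nnreal_ennreal).pow_const _, fun x => ?_, ?_⟩
  · have hp : (w x : ℝ≥0∞) ≠ 0 := by simpa using (h1 x).ne'
    refine ⟨?_, ?_⟩
    · simp [hp]
    · exact ENNReal.rpow_ne_top_of_nonneg (by positivity) (by simp)
  · unfold lqn
    simp_rw [← ENNReal.rpow_mul, one_div_mul_cancel hr.ne', ENNReal.rpow_one]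
    exact ENNReal.rpow_le_one h3.le (by positivity)

lemma essSup_meas [SFinite μ] (Z : Type) [MeasurableSpace Z] (F : Z → X → ℝ≥0∞)
    (hF : Measurable (fun t : Z × X => F t.1 t.2)) : Measurable fun z => essSup (F z) μ := by
  refine measurable_of_Iic fun a => ?_
  have : (fun z => essSup (F z) μ) ⁻¹' Set.Iic a =
      (fun z => μ (Prod.mk z ⁻¹' {t : Z × X | a < F t.1 t.2})) ⁻¹' {0} := by
    ext z
    simp only [Set.mem_preimage, Set.mem_Iic, Set.mem_singleton_iff, Set.preimage_ofPred_eq]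
    constructor
    · intro h
      have := ENNReal.ae_le_essSup (μ := μ) (F z)
      have h2 : ∀ᵐ x ∂μ, F z x ≤ a := this.mono fun x hx => hx.trans h
      rw [ae_iff] at h2
      simpa using h2
    · intro h
      refine essSup_le_of_ae_le a ?_
      show ∀ᵐ x ∂μ, F z x ≤ a
      rw [ae_iff]
      simpa using h
  rw [this]
  exact measurable_measure_prodMk_left (measurableSet_lt measurable_const hF)
    (measurableSet_singleton 0)

lemma BF_one [SigmaFinite μ] : BF μ (lqn 1 μ) (fun g => essSup g μ) where
  mono := lqn_mono one_pos
  hom := lqn_hom one_pos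
  dct := lqn_dct one_pos
  meas Z _ F hF := lqn_meas Z F hF
  meas' Z _ F hF := essSup_meas Z F hF
  wt := lqn_wt one_pos
  wt' := ⟨fun _ => 1, measurable_const, by simp, essSup_le_of_ae_le _ (ae_of_all _ fun _ => le_rfl)⟩
  holder f g hf hg := by
    simp only [lqn, ENNReal.rpow_one, div_one]
    rw [← lintegral_mul_const _ hf]
    refine lintegral_mono_ae ?_
    filter_upwards [ENNReal.ae_le_essSup (μ := μ) g] with x hx
    gcongr
  norming Z _ G hG := by
    obtain ⟨e, he⟩ := exists_surjective_nat (ℚ × ℕ)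
    let S : ℚ × ℕ → Z → Set X := fun a z =>
      spanningSets μ a.2 ∩ {x | ENNReal.ofReal (a.1 : ℝ) < G z x}
    have hS1 : ∀ a, MeasurableSet {t : Z × X | t.2 ∈ S a t.1} := fun a =>
      ((measurableSet_spanningSets μ a.2).preimage measurable_snd).inter
        (measurableSet_lt measurable_const hG)
    have hS2 : ∀ a z, MeasurableSet (S a z) := fun a z => (hS1 a).preimage (measurable_prodMk_left)
    have hSm : ∀ a, Measurable fun z => μ (S a z) := fun a =>
      measurable_measure_prodMk_left (hS1 a)
    refine ⟨fun j z x => (μ (S (e j) z))⁻¹ * (S (e j) z).indicator 1 x, fun j => ?_, fun j z => ?_,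
      fun z => ?_⟩
    · refine mulm (((hSm (e j)).inv).comp measurable_fst) ?_
      exact (measurable_const (a := (1 : ℝ≥0∞))).indicator (hS1 (e j))
    · simp only [lqn, ENNReal.rpow_one, div_one]
      rw [lintegral_const_mul _ (measurable_one.indicator (hS2 _ _)), lintegral_indicator_one (hS2 _ _)]
      exact ENNReal.inv_mul_le_one _
    · refine le_of_forall_lt fun c hc => ?_
      obtain ⟨r, hr0, hr1, hr2⟩ := ENNReal.lt_iff_exists_rat_btwn.1 hc
      have hr2' : ENNReal.ofReal (r : ℝ) < essSup (G z) μ := hr2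
      have h1 : μ {x | ENNReal.ofReal (r : ℝ) < G z x} ≠ 0 := by
        intro h0
        refine absurd hr2' (not_lt.2 (essSup_le_of_ae_le _ ?_))
        show ∀ᵐ x ∂μ, G z x ≤ _
        rw [ae_iff]
        simpa using h0
      have h2 : ∃ m, μ (S (r, m) z) ≠ 0 := by
        by_contra! hcon
        apply h1
        have : {x | ENNReal.ofReal (r : ℝ) < G z x} = ⋃ m, S (r, m) z := by
          simp only [S]
          rw [← Set.iUnion_inter, iUnion_spanningSets, Set.univ_inter]
        rw [this]
        exact measure_iUnion_null hcon
      obtain ⟨m, hm⟩ := h2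
      have hfin : μ (S (r, m) z) ≠ ∞ :=
        ((measure_mono Set.inter_subset_left).trans_lt (measure_spanningSets_lt_top μ m)).ne
      obtain ⟨j, hj⟩ := he (r, m)
      refine lt_of_lt_of_le hr1 (le_iSup_of_le j ?_)
      simp only [hj]
      calc ENNReal.ofReal (r : ℝ) = ENNReal.ofReal (r : ℝ) * ((μ (S (r, m) z))⁻¹ * μ (S (r, m) z)) := by
            rw [ENNReal.inv_mul_cancel hm hfin, mul_one]
        _ = ∫⁻ x, (μ (S (r, m) z))⁻¹ * (S (r, m) z).indicator 1 x * ENNReal.ofReal (r : ℝ) ∂μ := by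
            rw [lintegral_mul_const _ (by
              exact mulm measurable_const (measurable_one.indicator (hS2 _ _))),
              lintegral_const_mul _ (measurable_one.indicator (hS2 _ _)),
              lintegral_indicator_one (hS2 _ _), mul_comm]
        _ ≤ _ := by
            refine lintegral_mono fun x => ?_
            by_cases hx : x ∈ S (r, m) z
            · dsimp only
              gcongr
              exact hx.2.le
            · simp [hx]

lemma BF_conj [SigmaFinite μ] {r s : ℝ} (hrs : r.HolderConjugate s) :
    BF μ (lqn r μ) (lqn s μ) where
  mono := lqn_mono hrs.pos
  hom := lqn_hom hrs.pos
  dct := lqn_dct hrs.pos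
  meas Z _ F hF := lqn_meas Z F hF
  meas' Z _ F hF := lqn_meas Z F hF
  wt := lqn_wt hrs.pos
  wt' := lqn_wt hrs.symm.pos
  holder f g hf hg := ENNReal.lintegral_mul_le_Lp_mul_Lq μ hrs hf.aemeasurable hg.aemeasurable
  norming Z _ G hG := by
    have hr := hrs.pos
    have hs := hrs.symm.pos
    have hs1 : 0 < s - 1 := hrs.symm.sub_one_pos
    let g : ℕ → Z → X → ℝ≥0∞ := fun m z x => (spanningSets μ m).indicator (fun x => min (G z x) m) x
    have hgm : ∀ m, Measurable fun t : Z × X => g m t.1 t.2 := fun m =>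
      (Measurable.min hG measurable_const).indicator
        ((measurableSet_spanningSets μ m).preimage measurable_snd)
    let I : ℕ → Z → ℝ≥0∞ := fun m z => ∫⁻ x, g m z x ^ s ∂μ
    have hI : ∀ m, Measurable (I m) := fun m => Measurable.lintegral_prod_right' ((hgm m).pow_const s)
    have hgle : ∀ m z x, g m z x ≤ G z x := fun m z x => by
      refine Set.indicator_apply_le' (fun _ => min_le_left _ _) (fun _ => zero_le)
    have hIfin : ∀ m z, I m z ≠ ∞ := by
      intro m z
      refine ne_top_of_le_ne_top (b := (m : ℝ≥0∞) ^ s * μ (spanningSets μ m)) ?_ ?_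
      · exact ENNReal.mul_ne_top (ENNReal.rpow_ne_top_of_nonneg hs.le (by simp))
          (measure_spanningSets_lt_top μ m).ne
      · rw [← lintegral_indicator_const (measurableSet_spanningSets μ m)]
        refine lintegral_mono fun x => ?_
        simp only [g]
        by_cases hx : x ∈ spanningSets μ m
        · simp only [hx, Set.indicator_of_mem]
          exact ENNReal.rpow_le_rpow (min_le_right _ _) hs.le
        · simp [hx, hs]
    refine ⟨fun m z x => (I m z ^ (1 / r))⁻¹ * g m z x ^ (s - 1), fun m => ?_, fun m z => ?_,
      fun z => ?_⟩
    · exact mulm ((((hI m).pow_const _).inv).comp measurable_fst) ((hgm m).pow_const _)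
    · refine (lqn_hom hr _ _ ((secm (hgm m) z).pow_const _)).trans ?_
      have : lqn r μ (fun x => g m z x ^ (s - 1)) = I m z ^ (1 / r) := by
        simp only [lqn, I, ← ENNReal.rpow_mul]
        rw [hrs.symm.sub_one_mul_conj]
      rw [this]
      exact ENNReal.inv_mul_le_one _
    · have hA : lqn s μ (G z) ≤ ⨆ m, lqn s μ (g m z) := by
        have hmono : ∀ x, Monotone fun m => g m z x := by
          intro x i j hij
          simp only [g]
          by_cases hx : x ∈ spanningSets μ i
          · have hx' := monotone_spanningSets μ hij hx
            simp only [hx, hx', Set.indicator_of_mem]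
            gcongr
          · simp [hx]
        have hsup : ∀ x, G z x ^ s ≤ ⨆ m, g m z x ^ s := by
          intro x
          have h1 : Tendsto (fun m => g m z x) atTop (nhds (G z x)) := by
            have h2 : Tendsto (fun m : ℕ => min (G z x) (m : ℝ≥0∞)) atTop (nhds (min (G z x) ∞)) :=
              tendsto_const_nhds.min ENNReal.tendsto_nat_nhds_top
            rw [min_eq_left le_top] at h2
            refine h2.congr' ?_
            filter_upwards [eventually_ge_atTop (spanningSetsIndex μ x)] with m hm
            simp only [g]
            rw [Set.indicator_of_mem (mem_spanningSets_of_index_le μ x hm)]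
          have h2 := ((ENNReal.continuous_rpow_const (y := s)).tendsto _).comp h1
          exact le_of_tendsto' h2 fun m => le_iSup (fun m => g m z x ^ s) m
        have : lqn s μ (G z) ≤ (⨆ m, I m z) ^ (1 / s) := by
          refine ENNReal.rpow_le_rpow ?_ (by positivity)
          rw [← lintegral_iSup (fun m => (secm (hgm m) z).pow_const s)
            (fun i j hij x => ENNReal.rpow_le_rpow (hmono x hij) hs.le)]
          exact lintegral_mono hsup
        refine this.trans_eq ?_
        exact (ENNReal.orderIsoRpow (1 / s) (by positivity)).map_iSup _
      refine hA.trans (iSup_mono fun m => ?_)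
      by_cases h0 : I m z = 0
      · simp only [lqn]
        change I m z ^ (1 / s) ≤ _
        rw [h0, ENNReal.zero_rpow_of_pos (by positivity)]
        exact zero_le
      have e1 : lqn s μ (g m z) = (I m z ^ (1 / r))⁻¹ * I m z := by
        have : I m z ^ (1 / s) = I m z ^ (-(1 / r) + 1) := by
          congr 1
          have := hrs.inv_add_inv_eq_one
          simp only [one_div]
          linarith
        simp only [lqn]
        change I m z ^ (1 / s) = _
        rw [this, ENNReal.rpow_add _ _ h0 (hIfin m z), ENNReal.rpow_one, ENNReal.rpow_neg]
      rw [e1, ← lintegral_const_mul _ ((secm (hgm m) z).pow_const s)]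
      refine lintegral_mono fun x => ?_
      dsimp only
      rw [mul_assoc]
      gcongr
      calc g m z x ^ s = g m z x ^ ((s - 1) + 1) := by rw [sub_add_cancel]
        _ = g m z x ^ (s - 1) * g m z x := by
            rw [ENNReal.rpow_add_of_nonneg _ _ hs1.le zero_le_one, ENNReal.rpow_one]
        _ ≤ _ := by gcongr; exact hgle m z x

end lq



lemma conj_cases {q q' : ℝ≥0∞} (h1 : 1 ≤ q) (h2 : q ≠ ∞) (h : 1 / q + 1 / q' = 1) :
    (q = 1 ∧ q' = ∞) ∨ (q' ≠ ∞ ∧ q.toReal.HolderConjugate q'.toReal) := by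
  simp only [one_div] at h
  by_cases hq' : q' = ∞
  · left
    subst hq'
    simpa using h
  · right
    refine ⟨hq', ?_⟩
    have hq0 : q ≠ 0 := (zero_lt_one.trans_le h1).ne'
    have hq'0 : q' ≠ 0 := by
      rintro rfl
      simp at h
    rw [Real.holderConjugate_iff]
    have h3 : q.toReal⁻¹ + q'.toReal⁻¹ = 1 := by
      rw [← ENNReal.toReal_inv, ← ENNReal.toReal_inv, ← ENNReal.toReal_add (by simpa) (by simpa), h]
      simp
    refine ⟨?_, h3⟩
    have h4 : 0 < q'.toReal⁻¹ := inv_pos.2 (ENNReal.toReal_pos hq'0 hq')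
    have h5 : 0 < q.toReal := ENNReal.toReal_pos hq0 h2
    have h6 : q.toReal⁻¹ < 1 := by linarith
    exact (inv_lt_one₀ h5).1 h6

lemma herzRing_meas (k : ℤ) : MeasurableSet (herzRing k) :=
  measurableSet_Ioo.diff measurableSet_Ioo

lemma mem_herzRing {k : ℤ} {x : ℝ} : x ∈ herzRing k ↔ (2:ℝ)^(k-1) ≤ |x| ∧ |x| < (2:ℝ)^k := by
  unfold herzRing
  rw [Set.mem_sdiff, ← abs_lt (a := x) (b := (2:ℝ)^k) |>.symm.trans (by rfl) |> fun h => (by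
    simp [Set.mem_Ioo, abs_lt] : x ∈ Set.Ioo (-(2:ℝ)^k) ((2:ℝ)^k) ↔ |x| < (2:ℝ)^k)]
  rw [(by simp [Set.mem_Ioo, abs_lt] :
    x ∈ Set.Ioo (-(2:ℝ)^(k-1)) ((2:ℝ)^(k-1)) ↔ |x| < (2:ℝ)^(k-1)), not_lt, and_comm]

lemma BF_lqNormOn {q q' : ℝ≥0∞} (h1 : 1 ≤ q) (h2 : q ≠ ∞) (h : 1 / q + 1 / q' = 1) {s : Set ℝ}
    (hs : MeasurableSet s) :
    BF (volume.restrict s) (lqNormOn q s) (lqNormOn q' s) := by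
  rcases conj_cases h1 h2 h with ⟨rfl, rfl⟩ | ⟨h3, h4⟩
  · convert BF_one (μ := volume.restrict s) using 1
    · ext g; simp [lqNormOn, lqn]
    · ext g; simp [lqNormOn, ENNReal.essSup_indicator_eq_essSup_restrict hs]
  · convert BF_conj (μ := volume.restrict s) h4 using 1
    · ext g; simp [lqNormOn, lqn, h2]
    · ext g; simp [lqNormOn, lqn, h3]

lemma BF_lpZ {q q' : ℝ≥0∞} (h1 : 1 ≤ q) (h2 : q ≠ ∞) (h : 1 / q + 1 / q' = 1) :
    BF (Measure.count : Measure ℤ) (lpZNorm q) (lpZNorm q') := by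
  rcases conj_cases h1 h2 h with ⟨rfl, rfl⟩ | ⟨h3, h4⟩
  · convert BF_one (μ := (Measure.count : Measure ℤ)) using 1
    · ext g; simp [lpZNorm, lqn, lintegral_count]
    · ext g
      simp [lpZNorm]
  · convert BF_conj (μ := (Measure.count : Measure ℤ)) h4 using 1
    · ext g; simp [lpZNorm, lqn, h2, lintegral_count]
    · ext g; simp [lpZNorm, lqn, h3, lintegral_count]

def ringKer : ProbabilityTheory.Kernel ℤ ℝ :=
  ProbabilityTheory.Kernel.withDensity (ProbabilityTheory.Kernel.const ℤ (volume : Measure ℝ))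
    (fun k x => (herzRing k).indicator 1 x)

lemma ring_joint : Measurable (Function.uncurry fun (k : ℤ) (x : ℝ) =>
    (herzRing k).indicator (1 : ℝ → ℝ≥0∞) x) :=
  measurable_from_prod_countable_right fun k => measurable_one.indicator (herzRing_meas k)

instance : ProbabilityTheory.IsSFiniteKernel ringKer := by
  unfold ringKer
  refine ProbabilityTheory.Kernel.IsSFiniteKernel.withDensity _ fun k x => ?_
  by_cases hx : x ∈ herzRing k <;> simp [hx]

lemma ringKer_apply (k : ℤ) : ringKer k = volume.restrict (herzRing k) := by
  unfold ringKer
  rw [ProbabilityTheory.Kernel.withDensity_apply _ ring_joint]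
  simp only [ProbabilityTheory.Kernel.const_apply]
  rw [withDensity_indicator_one (herzRing_meas k)]

lemma herzRing_cover {x : ℝ} (hx : x ≠ 0) : ∃ k, x ∈ herzRing k := by
  obtain ⟨n, hn⟩ := exists_mem_Ico_zpow (x := |x|) (y := (2:ℝ)) (abs_pos.2 hx) one_lt_two
  refine ⟨n + 1, mem_herzRing.2 ?_⟩
  simpa using hn

lemma herzRing_unique {x : ℝ} {k l : ℤ} (hk : x ∈ herzRing k) (hl : x ∈ herzRing l) : k = l := by
  rw [mem_herzRing] at hk hl
  have h1 := (zpow_lt_zpow_iff_right₀ (one_lt_two (α := ℝ))).1 (hk.1.trans_lt hl.2)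
  have h2 := (zpow_lt_zpow_iff_right₀ (one_lt_two (α := ℝ))).1 (hl.1.trans_lt hk.2)
  omega

open Classical in
def ringIdx (x : ℝ) : ℤ := if h : ∃ k, x ∈ herzRing k then h.choose else 0

lemma ringIdx_eq {x : ℝ} {k : ℤ} (hk : x ∈ herzRing k) : ringIdx x = k := by
  have h : ∃ k, x ∈ herzRing k := ⟨k, hk⟩
  unfold ringIdx
  rw [dif_pos h]
  exact herzRing_unique h.choose_spec hk

lemma ringIdx_meas : Measurable ringIdx := by
  refine measurable_to_countable' fun k => ?_
  have hsub : ringIdx ⁻¹' {k} = herzRing k ∪ ({0} ∩ ringIdx ⁻¹' {k}) := by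
    ext x
    by_cases hx : x = 0
    · subst hx
      have : (0:ℝ) ∉ herzRing k := by
        rw [mem_herzRing]
        intro h
        have : (0:ℝ) < 2 ^ (k-1) := by positivity
        simp at h
        linarith [h.1]
      simp [this]
    · obtain ⟨l, hl⟩ := herzRing_cover hx
      simp only [Set.mem_preimage, Set.mem_singleton_iff, Set.mem_union, Set.mem_inter_iff, hx,
        false_and, or_false]
      rw [ringIdx_eq hl]
      exact ⟨fun h => h ▸ hl, fun h => herzRing_unique hl h⟩
  rw [hsub]
  exact (herzRing_meas k).union ((Set.finite_singleton (0:ℝ)).subset Set.inter_subset_left).measurableSet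

lemma snd_ring : MeasurePreserving (Prod.snd : ℤ × ℝ → ℝ)
    ((Measure.count : Measure ℤ).compProd ringKer) volume := by
  refine ⟨measurable_snd, ?_⟩
  ext s hs
  rw [Measure.map_apply measurable_snd hs, Measure.compProd_apply (measurable_snd hs),
    lintegral_count]
  have : ∀ k : ℤ, ringKer k (Prod.mk k ⁻¹' (Prod.snd ⁻¹' s)) = volume (s ∩ herzRing k) := by
    intro k
    rw [ringKer_apply]
    exact Measure.restrict_apply hs
  simp_rw [this]
  rw [← measure_iUnion]
  · rw [← Set.inter_iUnion]
    refine measure_congr ?_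
    have : ∀ᵐ x : ℝ, x ≠ 0 := by
      rw [ae_iff]; simp
    filter_upwards [this] with x hx
    have := Set.mem_iUnion.2 (herzRing_cover hx)
    exact propext ⟨fun h => h.1, fun h => ⟨h, this⟩⟩
  · intro k l hkl
    rw [Function.onFun, Set.disjoint_left]
    intro x hx hx'
    exact hkl (herzRing_unique hx.2 hx'.2)
  · exact fun k => hs.inter (herzRing_meas k)

lemma BF_herz1 (α : ℝ) {p q p' q' : ℝ≥0∞} (hp : 1 ≤ p ∧ p ≠ ∞) (hq : 1 ≤ q ∧ q ≠ ∞)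
    (hp' : 1 / p + 1 / p' = 1) (hq' : 1 / q + 1 / q' = 1) :
    BF (volume : Measure ℝ) (herzNorm1 α p q) (herzNorm1 (-α) p' q') := by
  have h1 : ∀ k : ℤ, BF (ringKer k)
      (fun f => ENNReal.ofReal ((2:ℝ) ^ ((k:ℝ) * α)) * lqNormOn q (herzRing k) f)
      (fun f => ENNReal.ofReal ((2:ℝ) ^ ((k:ℝ) * -α)) * lqNormOn q' (herzRing k) f) := by
    intro k
    rw [ringKer_apply]
    have hpos : 0 < (2:ℝ) ^ ((k:ℝ) * α) := by positivity
    refine (BF_lqNormOn hq.1 hq.2 hq' (herzRing_meas k)).scale _ _ (by simpa using hpos)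
      ENNReal.ofReal_ne_top ?_
    rw [← ENNReal.ofReal_inv_of_pos hpos, mul_neg, Real.rpow_neg (by norm_num)]
  have h2 := (JF.of_countable h1).comp (BF_lpZ hp.1 hp.2 hp')
  exact h2.transport Prod.snd (fun x => (ringIdx x, x)) snd_ring (ringIdx_meas.prodMk measurable_id) (by
    have hS : MeasurableSet {t : ℤ × ℝ | (ringIdx t.2, t.2) = t} :=
      measurableSet_eq_fun ((ringIdx_meas.comp measurable_snd).prodMk measurable_snd) measurable_id
    rw [Measure.ae_compProd_iff hS]
    refine ae_of_all _ fun k => ?_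
    rw [ringKer_apply]
    filter_upwards [ae_restrict_mem (herzRing_meas k)] with x hx
    rw [ringIdx_eq hx])

lemma BF_dirac : BF (volume : Measure (Fin 0 → ℝ)) (fun f => f fun i => i.elim0)
    (fun f => f fun i => i.elim0) := by
  rw [Measure.volume_pi_eq_dirac (fun i => i.elim0)]
  set a : Fin 0 → ℝ := fun i => i.elim0
  have hs : ∀ x : Fin 0 → ℝ, x = a := fun x => Subsingleton.elim _ _
  have hae : ∀ P : (Fin 0 → ℝ) → Prop, (∀ᵐ x ∂(Measure.dirac a), P x) → P a := by
    intro P h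
    have := (ae_dirac_iff (a := a) (p := P) (by
      exact (Set.toFinite _).measurableSet)).1 h
    exact this
  exact
  { mono := fun f g h => hae _ h
    hom := fun c f hf => le_rfl
    dct := fun f hf hm ht h0 => hae _ ht
    meas := fun Z _ F hF => hF.comp (f := fun z => (z, a)) (by fun_prop)
    meas' := fun Z _ F hF => hF.comp (f := fun z => (z, a)) (by fun_prop)
    holder := fun f g hf hg => by rw [lintegral_dirac' _ (mulm hf hg)]
    norming := fun Z _ G hG => ⟨fun _ _ _ => 1, fun j => measurable_const, fun j z => le_rfl,
      fun z => by simp [lintegral_dirac' _ (secm hG z)]⟩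
    wt := ⟨fun _ => 1, measurable_const, by simp, le_rfl⟩
    wt' := ⟨fun _ => 1, measurable_const, by simp, le_rfl⟩ }

lemma BF_mixed (n : ℕ) : ∀ (α : Fin n → ℝ) (p q p' q' : Fin n → ℝ≥0∞)
    (_ : ∀ i, 1 ≤ p i ∧ p i ≠ ∞) (_ : ∀ i, 1 ≤ q i ∧ q i ≠ ∞)
    (_ : ∀ i, 1 / p i + 1 / p' i = 1) (_ : ∀ i, 1 / q i + 1 / q' i = 1),
    BF (volume : Measure (Fin n → ℝ)) (mixedHerzNormE n α p q) (mixedHerzNormE n (-α) p' q') := by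
  induction n with
  | zero => intro α p q p' q' _ _ _ _; exact BF_dirac
  | succ n ih =>
    intro α p q p' q' hp hq hp' hq'
    have h1 := BF_herz1 (α (Fin.last n)) (hp (Fin.last n)) (hq (Fin.last n)) (hp' (Fin.last n)) (hq' (Fin.last n))
    have h2 := ih (Fin.init α) (Fin.init p) (Fin.init q) (Fin.init p') (Fin.init q')
      (fun i => hp _) (fun i => hq _) (fun i => hp' _) (fun i => hq' _)
    have h3 := (JF.const (Y := ℝ) h2).comp h1
    rw [Measure.compProd_const] at h3
    have hmp := (volume_preserving_piFinSuccAbove (fun _ : Fin (n+1) => ℝ) (Fin.last n)).symm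
    have h4 := h3.transport (X := Fin (n+1) → ℝ) _ _ hmp
      (MeasurableEquiv.piFinSuccAbove (fun _ : Fin (n+1) => ℝ) (Fin.last n)).measurable
      (ae_of_all _ fun x => MeasurableEquiv.apply_symm_apply _ x)
    have hsn : ∀ (x : ℝ) (y : Fin n → ℝ),
        (MeasurableEquiv.piFinSuccAbove (fun _ : Fin (n+1) => ℝ) (Fin.last n)).symm (x, y)
          = Fin.snoc y x := by
      intro x y
      exact Fin.insertNth_last' x y
    simp only [Function.comp_def, hsn] at h4
    exact h4



def phz (z : ℂ) : ℂ := (starRingEnd ℂ) z / (‖z‖ : ℂ)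

lemma phz_meas : Measurable phz := by unfold phz; fun_prop

lemma phz_norm (z : ℂ) : ‖phz z‖ₑ ≤ 1 := by
  rw [← ofReal_norm]
  refine ENNReal.ofReal_le_one.2 ?_
  unfold phz
  rw [norm_div, RCLike.norm_conj, Complex.norm_real, norm_norm]
  exact div_self_le_one _

lemma phz_mul (z : ℂ) : phz z * z = (‖z‖ : ℂ) := by
  unfold phz
  by_cases hz : z = 0
  · simp [hz]
  · have : (‖z‖ : ℂ) ≠ 0 := by simpa using hz
    rw [div_mul_eq_mul_div, div_eq_iff this, mul_comm, Complex.mul_conj, Complex.normSq_eq_norm_sq]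
    push_cast; ring

lemma toReal_enorm_le (a : ℝ≥0∞) : ‖((a.toReal : ℝ) : ℂ)‖ₑ ≤ a := by
  rw [← ofReal_norm, Complex.norm_real, Real.norm_of_nonneg ENNReal.toReal_nonneg]
  exact ENNReal.ofReal_toReal_le

section
variable {X : Type} [MeasurableSpace X] {μ : Measure X}

lemma phase_le (F : X → ℝ≥0∞) (g : X → ℂ) (x : X) :
    ‖((F x).toReal : ℂ) * phz (g x)‖ₑ ≤ F x := by
  rw [enorm_mul]
  calc _ ≤ F x * 1 := mul_le_mul' (toReal_enorm_le _) (phz_norm _)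
    _ = _ := mul_one _

lemma phase_meas {F : X → ℝ≥0∞} {g : X → ℂ} (hF : Measurable F) (hg : Measurable g) :
    Measurable fun x => ((F x).toReal : ℂ) * phz (g x) :=
  (Complex.measurable_ofReal.comp hF.ennreal_toReal).mul (phz_meas.comp hg)

lemma phase_int {F : X → ℝ≥0∞} {g : X → ℂ} (hF : Measurable F) (hg : Measurable g)
    (hfin : ∫⁻ x, F x * ‖g x‖ₑ ∂μ ≠ ∞) :
    ‖∫ x, ((F x).toReal : ℂ) * phz (g x) * g x ∂μ‖ₑ = ∫⁻ x, F x * ‖g x‖ₑ ∂μ := by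
  have e : ∀ x, ((F x).toReal : ℂ) * phz (g x) * g x = (((F x * ‖g x‖ₑ).toReal : ℝ) : ℂ) := by
    intro x
    rw [mul_assoc, phz_mul, ENNReal.toReal_mul, toReal_enorm]; push_cast; rfl
  have hm : Measurable fun x => F x * ‖g x‖ₑ := hF.mul hg.enorm
  simp_rw [e]
  rw [integral_complex_ofReal, integral_toReal hm.aemeasurable (ae_lt_top hm hfin),
    ← ofReal_norm, Complex.norm_real, Real.norm_of_nonneg ENNReal.toReal_nonneg,
    ENNReal.ofReal_toReal hfin]

end

namespace BF
variable {X : Type} [MeasurableSpace X] {μ : Measure X} {ρ ρ' : (X → ℝ≥0∞) → ℝ≥0∞}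

lemma dual_bd (h : BF μ ρ ρ') {f g : X → ℂ} (hf : Measurable f) (hg : Measurable g) :
    ‖∫ x, f x * g x ∂μ‖ₑ ≤ ρ (fun x => ‖f x‖ₑ) * ρ' (fun x => ‖g x‖ₑ) := by
  refine (enorm_integral_le_lintegral_enorm _).trans ?_
  simp_rw [enorm_mul]
  exact h.holder _ _ hf.enorm hg.enorm

lemma dual_integrable (h : BF μ ρ ρ') {f g : X → ℂ} (hf : Measurable f) (hg : Measurable g)
    (h1 : ρ (fun x => ‖f x‖ₑ) ≠ ∞) (h2 : ρ' (fun x => ‖g x‖ₑ) ≠ ∞) :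
    Integrable (fun x => f x * g x) μ := by
  refine ⟨(hf.mul hg).aestronglyMeasurable, ?_⟩
  unfold HasFiniteIntegral
  simp_rw [enorm_mul]
  exact (h.holder _ _ hf.enorm hg.enorm).trans_lt (ENNReal.mul_lt_top h1.lt_top h2.lt_top)

lemma dual_norm (h : BF μ ρ ρ') {g : X → ℂ} (hg : Measurable g)
    (hfin : ρ' (fun x => ‖g x‖ₑ) ≠ ∞) :
    ρ' (fun x => ‖g x‖ₑ) =
      ⨆ (f : X → ℂ) (_ : Measurable f) (_ : ρ (fun x => ‖f x‖ₑ) ≤ 1), ‖∫ x, f x * g x ∂μ‖ₑ := by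
  refine le_antisymm ?_ ?_
  · refine h.le_of_forall hg.enorm fun F hF h1 => ?_
    have hf : ∫⁻ x, F x * ‖g x‖ₑ ∂μ ≠ ∞ :=
      ((h.holder1 hF hg.enorm h1).trans_lt hfin.lt_top).ne
    rw [← phase_int hF hg hf]
    refine le_iSup₂_of_le (fun x => ((F x).toReal : ℂ) * phz (g x)) (phase_meas hF hg) ?_
    exact le_iSup_of_le ((h.mono _ _ (ae_of_all _ fun x => phase_le F g x)).trans h1) le_rfl
  · refine iSup₂_le fun f hf => iSup_le fun h1 => ?_
    exact (h.dual_bd hf hg).trans (mul_le_of_le_one_left' h1)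

end BF

structure TF {X : Type} [MeasurableSpace X] (ρ : (X → ℝ≥0∞) → ℝ≥0∞) (T : (X → ℂ) → ℂ)
    (C : ℝ≥0∞) : Prop where
  add : ∀ f g : X → ℂ, Measurable f → ρ (fun x => ‖f x‖ₑ) ≠ ∞ →
        Measurable g → ρ (fun x => ‖g x‖ₑ) ≠ ∞ → T (f + g) = T f + T g
  smul : ∀ (c : ℂ) (f : X → ℂ), Measurable f → ρ (fun x => ‖f x‖ₑ) ≠ ∞ → T (c • f) = c * T f
  fin : C ≠ ∞
  bd : ∀ f : X → ℂ, Measurable f → ρ (fun x => ‖f x‖ₑ) ≠ ∞ → ‖T f‖ₑ ≤ C * ρ (fun x => ‖f x‖ₑ)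

namespace TF
variable {X : Type} [MeasurableSpace X] {μ : Measure X} {ρ ρ' : (X → ℝ≥0∞) → ℝ≥0∞}
  {T : (X → ℂ) → ℂ} {C : ℝ≥0∞}

lemma sub (hT : TF ρ T C) {f g : X → ℂ} (hf : Measurable f) (h1 : ρ (fun x => ‖f x‖ₑ) ≠ ∞)
    (hg : Measurable g) (h2 : ρ (fun x => ‖g x‖ₑ) ≠ ∞) : T (f - g) = T f - T g := by
  have e : f - g = f + (-1 : ℂ) • g := by ext x; simp [sub_eq_add_neg]
  rw [e, hT.add f _ hf h1 (hg.const_smul _) (by simpa using h2), hT.smul _ _ hg h2]; ring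

lemma zero_ae (h : BF μ ρ ρ') (hT : TF ρ T C) {f : X → ℂ} (hf : Measurable f)
    (h0 : f =ᵐ[μ] 0) : T f = 0 := by
  have : ρ (fun x => ‖f x‖ₑ) = 0 := by
    refine le_antisymm ?_ zero_le
    have h1 := h.hom 0 (fun _ => 0) measurable_const
    simp only [zero_mul] at h1
    refine le_trans (h.mono _ _ ?_) h1
    filter_upwards [h0] with x hx
    simp [hx]
  have h2 := hT.bd f hf (by simp [this])
  rw [this, mul_zero] at h2
  simpa using h2

lemma tend (h : BF μ ρ ρ') (hT : TF ρ T C) (f : ℕ → X → ℂ) (F : X → ℝ≥0∞)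
    (hf : ∀ n, Measurable (f n)) (hF : ρ F ≠ ∞) (hle : ∀ n x, ‖f n x‖ₑ ≤ F x)
    (ht : ∀ᵐ x ∂μ, Tendsto (fun n => f n x) atTop (nhds 0)) :
    Tendsto (fun n => T (f n)) atTop (nhds 0) := by
  rw [tendsto_zero_iff_enorm_tendsto_zero]
  have h1 := h.dct_gen (fun n x => ‖f n x‖ₑ) F (fun n => (hf n).enorm) hF hle (by
    filter_upwards [ht] with x hx
    exact tendsto_zero_iff_enorm_tendsto_zero.1 hx)
  have h2 := ENNReal.Tendsto.const_mul (a := C) h1 (Or.inr hT.fin)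
  rw [mul_zero] at h2
  refine tendsto_of_tendsto_of_tendsto_of_le_of_le tendsto_const_nhds h2 (fun n => zero_le) ?_
  intro n
  refine hT.bd _ (hf n) ?_
  exact ((h.mono _ _ (ae_of_all _ (hle n))).trans_lt hF.lt_top).ne

end TF

lemma BF.fin_of_le {X : Type} [MeasurableSpace X] {μ : Measure X} {ρ ρ' : (X → ℝ≥0∞) → ℝ≥0∞}
    (h : BF μ ρ ρ') {w : X → ℝ≥0∞} (hw : Measurable w) (hw1 : ρ w ≤ 1) {c : ℝ≥0∞} (hc : c ≠ ∞)
    {f : X → ℝ≥0∞} (hf : ∀ x, f x ≤ c * w x) : ρ f ≠ ∞ := by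
  have h1 : ρ f ≤ c * 1 :=
    (h.mono _ _ (ae_of_all _ hf)).trans ((h.hom c w hw).trans (by gcongr))
  rw [mul_one] at h1
  exact (h1.trans_lt hc.lt_top).ne

namespace TF
variable {X : Type} [MeasurableSpace X] {μ : Measure X} {ρ ρ' : (X → ℝ≥0∞) → ℝ≥0∞}
  {T : (X → ℂ) → ℂ} {C : ℝ≥0∞}

/-- density on sets -/
lemma density [SigmaFinite μ] (h : BF μ ρ ρ') (hT : TF ρ T C) {W : X → ℂ} (hW : Measurable W)
    (hW1 : ρ (fun x => ‖W x‖ₑ) ≤ 1) :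
    ∃ k : X → ℂ, Measurable k ∧ Integrable k μ ∧
      ∀ A, MeasurableSet A → T (A.indicator W) = ∫ x in A, k x ∂μ := by
  classical
  have hfin : ρ (fun x => ‖W x‖ₑ) ≠ ∞ := (hW1.trans_lt one_lt_top).ne
  have hle : ∀ (A : Set X) x, ‖A.indicator W x‖ₑ ≤ ‖W x‖ₑ := fun A x => by
    by_cases hx : x ∈ A <;> simp [hx]
  have hA : ∀ A : Set X, ρ (fun x => ‖A.indicator W x‖ₑ) ≠ ∞ := fun A =>
    ((h.mono _ _ (ae_of_all _ (hle A))).trans_lt hfin.lt_top).ne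
  let ν : ComplexMeasure X :=
    { measureOf' := fun A => if MeasurableSet A then T (A.indicator W) else 0
      empty' := by
        rw [if_pos MeasurableSet.empty]
        exact zero_ae h hT (hW.indicator MeasurableSet.empty) (ae_of_all _ fun x => by simp)
      not_measurable' := fun A hA => if_neg hA
      m_iUnion' := by
        intro B hB hd
        have hsum : ∀ s : Finset ℕ, T ((⋃ i ∈ s, B i).indicator W) = ∑ i ∈ s, T ((B i).indicator W) := by
          intro s
          induction s using Finset.induction_on with
          | empty => 
            simp only [Finset.sum_empty]
            exact zero_ae h hT (hW.indicator (by simp)) (ae_of_all _ fun x => by simp)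
          | insert a s ha ih =>
            rw [Finset.sum_insert ha, ← ih, Finset.set_biUnion_insert,
              Set.indicator_union_of_disjoint]
            · exact hT.add _ _ (hW.indicator (hB a)) (hA _)
                (hW.indicator (Finset.measurableSet_biUnion _ fun i _ => hB i)) (hA _)
            · rw [Set.disjoint_iUnion₂_right]
              intro i hi
              exact hd (by rintro rfl; exact ha hi)
        simp only [hB, MeasurableSet.iUnion hB, if_true]
        refine tendsto_of_seq_tendsto fun s hs => ?_
        rw [← tendsto_sub_nhds_zero_iff]
        have h1 : ∀ n, ∑ i ∈ s n, T ((B i).indicator W) - T ((⋃ i, B i).indicator W)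
            = T ((⋃ i ∈ s n, B i).indicator W - (⋃ i, B i).indicator W) := by
          intro n
          rw [← hsum, hT.sub (hW.indicator (Finset.measurableSet_biUnion _ fun i _ => hB i)) (hA _)
            (hW.indicator (MeasurableSet.iUnion hB)) (hA _)]
        simp only [SummationFilter.unconditional_filter] at *
        refine Tendsto.congr (fun n => (h1 n).symm) ?_
        refine hT.tend h _ (fun x => ‖W x‖ₑ) (fun n => (hW.indicator (Finset.measurableSet_biUnion _ fun i _ => hB i)).sub 
            (hW.indicator (MeasurableSet.iUnion hB))) hfin ?_ (ae_of_all _ ?_)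
        · intro n x
          by_cases hx : x ∈ ⋃ i ∈ s n, B i
          · have hx2 : x ∈ ⋃ i, B i := by
              simp only [Set.mem_iUnion] at hx ⊢
              obtain ⟨i, _, hi⟩ := hx; exact ⟨i, hi⟩
            simp only [Pi.sub_apply, Set.indicator_of_mem hx, Set.indicator_of_mem hx2]
            simp
          · simp only [Pi.sub_apply, Set.indicator_of_notMem hx, zero_sub, enorm_neg]
            exact hle _ _
        · intro x
          by_cases hx : x ∈ ⋃ i, B i
          · obtain ⟨i, hi⟩ := Set.mem_iUnion.1 hx
            refine tendsto_const_nhds.congr' ?_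
            filter_upwards [hs.eventually (eventually_ge_atTop {i})] with n hn
            have hx2 : x ∈ ⋃ i ∈ s n, B i := Set.mem_biUnion (Finset.singleton_subset_iff.1 hn) hi
            simp only [Pi.sub_apply, Set.indicator_of_mem hx, Set.indicator_of_mem hx2, sub_self]
          · refine tendsto_const_nhds.congr ?_
            intro n
            have hx2 : x ∉ ⋃ i ∈ s n, B i := by
              simp only [Set.mem_iUnion] at hx ⊢
              rintro ⟨i, _, hi⟩; exact hx ⟨i, hi⟩
            simp only [Pi.sub_apply, Set.indicator_of_notMem hx, Set.indicator_of_notMem hx2, sub_self] }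
  have hν : ∀ A, MeasurableSet A → ν A = T (A.indicator W) := fun A hA => if_pos hA
  have hac : ν ≪ᵥ μ.toENNRealVectorMeasure := by
    refine VectorMeasure.AbsolutelyContinuous.mk fun A hA h0 => ?_
    rw [hν A hA]
    rw [Measure.toENNRealVectorMeasure_apply_measurable hA] at h0
    exact zero_ae h hT (hW.indicator hA) (indicator_meas_zero h0)
  obtain ⟨hre, him⟩ := (ComplexMeasure.absolutelyContinuous_ennreal_iff _ _).1 hac
  have er := SignedMeasure.withDensityᵥ_rnDeriv_eq _ μ hre
  have ei := SignedMeasure.withDensityᵥ_rnDeriv_eq _ μ him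
  set a := (ComplexMeasure.re ν).rnDeriv μ with ha
  set b := (ComplexMeasure.im ν).rnDeriv μ with hb
  have iab : Integrable a μ := SignedMeasure.integrable_rnDeriv _ _
  have ibb : Integrable b μ := SignedMeasure.integrable_rnDeriv _ _
  have mab : Measurable a := SignedMeasure.measurable_rnDeriv _ _
  have mbb : Measurable b := SignedMeasure.measurable_rnDeriv _ _
  refine ⟨fun x => (a x : ℂ) + (b x : ℂ) * Complex.I, by fun_prop,
    iab.ofReal.add (ibb.ofReal.mul_const _), fun A hA => ?_⟩
  rw [integral_add (μ := μ.restrict A) (f := fun x => (a x : ℂ)) (g := fun x => (b x : ℂ) * Complex.I)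
      iab.ofReal.restrict (ibb.ofReal.mul_const _).restrict,
    integral_mul_const, integral_complex_ofReal, integral_complex_ofReal,
    ← withDensityᵥ_apply iab hA, ← withDensityᵥ_apply ibb hA, er, ei, ← hν A hA]
  change ν A = ((ν A).re : ℂ) + ((ν A).im : ℂ) * Complex.I
  rw [Complex.re_add_im]

end TF



namespace TF
variable {X : Type} [MeasurableSpace X] {μ : Measure X} {ρ ρ' : (X → ℝ≥0∞) → ℝ≥0∞}
  {T : (X → ℂ) → ℂ} {C : ℝ≥0∞}

lemma simple_fin (h : BF μ ρ ρ') {W : X → ℂ} (hW : Measurable W)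
    (hW1 : ρ (fun x => ‖W x‖ₑ) ≤ 1) (φ : SimpleFunc X ℂ) :
    ρ (fun x => ‖φ x * W x‖ₑ) ≠ ∞ := by
  obtain ⟨c, hc⟩ := φ.exists_forall_norm_le
  refine h.fin_of_le hW.enorm hW1 (c := ENNReal.ofReal c) ENNReal.ofReal_ne_top fun x => ?_
  rw [enorm_mul, ← ofReal_norm (φ x)]
  gcongr
  exact hc x

lemma simple (h : BF μ ρ ρ') (hT : TF ρ T C) {W : X → ℂ} (hW : Measurable W)
    (hW1 : ρ (fun x => ‖W x‖ₑ) ≤ 1) {k : X → ℂ} (hk : Integrable k μ)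
    (hkT : ∀ A, MeasurableSet A → T (A.indicator W) = ∫ x in A, k x ∂μ) (φ : SimpleFunc X ℂ) :
    T (fun x => φ x * W x) = ∫ x, φ x * k x ∂μ := by
  have hfin : ρ (fun x => ‖W x‖ₑ) ≠ ∞ := (hW1.trans_lt one_lt_top).ne
  induction φ using SimpleFunc.induction with
  | @const c s hs =>
    have e1 : (fun x => (SimpleFunc.piecewise s hs (SimpleFunc.const X c) (SimpleFunc.const X 0)) x
        * W x) = c • s.indicator W := by
      ext x
      by_cases hx : x ∈ s <;> simp [hx]
    have e2 : (fun x => (SimpleFunc.piecewise s hs (SimpleFunc.const X c) (SimpleFunc.const X 0)) x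
        * k x) = s.indicator fun x => c * k x := by
      ext x
      by_cases hx : x ∈ s <;> simp [hx]
    have hle : ∀ x, ‖s.indicator W x‖ₑ ≤ ‖W x‖ₑ := fun x => by
      by_cases hx : x ∈ s <;> simp [hx]
    rw [e1, e2, integral_indicator hs, integral_const_mul, ← hkT s hs]
    exact hT.smul _ _ (hW.indicator hs)
      ((h.mono _ _ (ae_of_all _ hle)).trans_lt hfin.lt_top).ne
  | @add f g hd hf hg =>
    have e1 : (fun x => (f + g) x * W x) = (fun x => f x * W x) + fun x => g x * W x := by
      ext x; simp [add_mul]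
    have hi : ∀ f : SimpleFunc X ℂ, Integrable (fun x => f x * k x) μ := by
      intro f
      obtain ⟨c, hc⟩ := f.exists_forall_norm_le
      exact hk.bdd_mul f.aestronglyMeasurable (ae_of_all _ hc)
    rw [e1, hT.add (fun x => f x * W x) (fun x => g x * W x) (f.measurable.mul hW) (simple_fin h hW hW1 f) (g.measurable.mul hW)
      (simple_fin h hW hW1 g), hf, hg, ← integral_add (hi f) (hi g)]
    simp [add_mul]

lemma bounded (h : BF μ ρ ρ') (hT : TF ρ T C) {W : X → ℂ} (hW : Measurable W)
    (hW1 : ρ (fun x => ‖W x‖ₑ) ≤ 1) {k : X → ℂ} (hk : Integrable k μ)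
    (hkT : ∀ A, MeasurableSet A → T (A.indicator W) = ∫ x in A, k x ∂μ)
    {φ : X → ℂ} (hφ : Measurable φ) (c : ℝ) (hc : ∀ x, ‖φ x‖ ≤ c) :
    T (fun x => φ x * W x) = ∫ x, φ x * k x ∂μ := by
  let s : ℕ → SimpleFunc X ℂ := SimpleFunc.approxOn φ hφ Set.univ 0 (Set.mem_univ _)
  have hs : ∀ x, Tendsto (fun n => s n x) atTop (nhds (φ x)) := fun x =>
    SimpleFunc.tendsto_approxOn hφ (Set.mem_univ _) (by simp)
  have hs1 : ∀ n x, ‖s n x - φ x‖ₑ ≤ ‖φ x‖ₑ := fun n x => by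
    have := SimpleFunc.edist_approxOn_le hφ (Set.mem_univ (0:ℂ)) x n
    rw [edist_eq_enorm_sub, edist_eq_enorm_sub, zero_sub, enorm_neg] at this
    exact this
  have hs2 : ∀ n x, ‖s n x‖ ≤ 2 * c := fun n x => by
    have h1 := hs1 n x
    rw [← ofReal_norm, ← ofReal_norm, ENNReal.ofReal_le_ofReal_iff (norm_nonneg _)] at h1
    have := norm_add_le (s n x - φ x) (φ x)
    rw [sub_add_cancel] at this
    linarith [hc x]
  have hφe : ∀ x, ‖φ x‖ₑ ≤ ENNReal.ofReal c := fun x => by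
    rw [← ofReal_norm]; exact ENNReal.ofReal_le_ofReal (hc x)
  have hφf : ρ (fun x => ‖φ x * W x‖ₑ) ≠ ∞ := by
    refine h.fin_of_le hW.enorm hW1 (c := ENNReal.ofReal c) ENNReal.ofReal_ne_top fun x => ?_
    rw [enorm_mul]
    gcongr
    exact hφe x
  have t1 : Tendsto (fun n => T (fun x => s n x * W x)) atTop (nhds (T fun x => φ x * W x)) := by
    rw [← tendsto_sub_nhds_zero_iff]
    have e : ∀ n, T (fun x => s n x * W x) - T (fun x => φ x * W x)
        = T ((fun x => s n x * W x) - fun x => φ x * W x) := fun n =>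
      (hT.sub ((s n).measurable.mul hW) (simple_fin h hW hW1 _) (hφ.mul hW) hφf).symm
    refine Tendsto.congr (fun n => (e n).symm) ?_
    refine hT.tend h _ (fun x => ‖φ x * W x‖ₑ)
      (fun n => ((s n).measurable.mul hW).sub (hφ.mul hW)) hφf ?_ (ae_of_all _ fun x => ?_)
    · intro n x
      rw [Pi.sub_apply, ← sub_mul, enorm_mul, enorm_mul]
      gcongr
      exact hs1 n x
    · have := ((hs x).mul_const (W x))
      exact tendsto_sub_nhds_zero_iff.2 this
  have t2 : Tendsto (fun n => ∫ x, s n x * k x ∂μ) atTop (nhds (∫ x, φ x * k x ∂μ)) := by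
    refine tendsto_integral_of_dominated_convergence (fun x => 2 * c * ‖k x‖)
      (fun n => (s n).aestronglyMeasurable.mul hk.1) (hk.norm.const_mul _)
      (fun n => ae_of_all _ fun x => ?_) (ae_of_all _ fun x => (hs x).mul_const _)
    rw [norm_mul]
    gcongr
    exact hs2 n x
  refine tendsto_nhds_unique t1 (t2.congr fun n => ?_)
  exact (hT.simple h hW hW1 hk hkT (s n)).symm

lemma exists_dual [SigmaFinite μ] (h : BF μ ρ ρ') (hT : TF ρ T C) :
    ∃ g : X → ℂ, Measurable g ∧ ρ' (fun x => ‖g x‖ₑ) ≠ ∞ ∧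
      ∀ f : X → ℂ, Measurable f → ρ (fun x => ‖f x‖ₑ) ≠ ∞ → T f = ∫ x, f x * g x ∂μ := by
  obtain ⟨w, hw, hw0, hw1⟩ := h.wt
  have hr0 : ∀ x, 0 < (w x).toReal := fun x => ENNReal.toReal_pos (hw0 x).1 (hw0 x).2
  set W : X → ℂ := fun x => ((w x).toReal : ℂ) with hWd
  have hW0 : ∀ x, W x ≠ 0 := fun x => by
    simpa [hWd] using (hr0 x).ne'
  have hWn : ∀ x, ‖W x‖ = (w x).toReal := fun x => by
    rw [hWd]; simp
  have hWe : ∀ x, ‖W x‖ₑ = w x := fun x => by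
    rw [← ofReal_norm, hWn, ENNReal.ofReal_toReal (hw0 x).2]
  have hW : Measurable W := Complex.measurable_ofReal.comp hw.ennreal_toReal
  have hW1 : ρ (fun x => ‖W x‖ₑ) ≤ 1 := by simpa only [hWe] using hw1
  obtain ⟨k, hk, hki, hkT⟩ := hT.density h hW hW1
  obtain ⟨g, hgd⟩ : ∃ g : X → ℂ, ∀ x, g x = k x / W x := ⟨_, fun x => rfl⟩
  have hB : ∀ (f : X → ℂ), Measurable f → ∀ m : ℕ, (∀ x, ‖f x‖ₑ ≤ m * w x) →
      T f = ∫ x, f x * g x ∂μ := by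
    intro f hf m hm
    have h1 := hT.bounded h hW hW1 hki hkT (φ := fun x => f x / W x) (hf.div hW) m (fun x => by
      rw [norm_div, hWn, div_le_iff₀ (hr0 x)]
      have := ENNReal.toReal_mono (ENNReal.mul_ne_top (by simp) (hw0 x).2) (hm x)
      simpa using this)
    have e1 : (fun x => f x / W x * W x) = f := by ext x; exact div_mul_cancel₀ _ (hW0 x)
    rw [e1] at h1
    rw [h1]
    congr 1; ext x; rw [hgd]; ring
  have hg : Measurable g := by
    have : g = fun x => k x / W x := funext hgd
    rw [this]; exact hk.div hW
  have hG : ∀ (m : ℕ) (G : X → ℝ≥0∞), Measurable G → ρ G ≤ 1 → (∀ x, G x ≤ m * w x) →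
      ∫⁻ x, G x * ‖g x‖ₑ ∂μ ≤ C := by
    intro m G hGm hG1 hG2
    have hfin : ∫⁻ x, G x * ‖g x‖ₑ ∂μ ≠ ∞ := by
      have : ∫⁻ x, G x * ‖g x‖ₑ ∂μ ≤ ∫⁻ x, m * ‖k x‖ₑ ∂μ := by
        refine lintegral_mono fun x => ?_
        calc _ ≤ m * w x * ‖g x‖ₑ := by gcongr; exact hG2 x
          _ = m * (‖g x‖ₑ * ‖W x‖ₑ) := by rw [hWe]; ring
          _ = m * ‖k x‖ₑ := by rw [← enorm_mul, hgd, div_mul_cancel₀ _ (hW0 x)]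
      rw [lintegral_const_mul _ hk.enorm] at this
      exact (this.trans_lt (ENNReal.mul_lt_top (by simp) hki.2)).ne
    have hB1 := hB _ (phase_meas hGm hg) m (fun x => (phase_le G g x).trans (hG2 x))
    rw [← phase_int hGm hg hfin, ← hB1]
    have hn : ρ (fun x => ‖((G x).toReal : ℂ) * phz (g x)‖ₑ) ≤ 1 :=
      (h.mono _ _ (ae_of_all _ fun x => phase_le G g x)).trans hG1
    refine (hT.bd _ (phase_meas hGm hg) (hn.trans_lt one_lt_top).ne).trans ?_
    exact mul_le_of_le_one_right' hn
  have hgC : ρ' (fun x => ‖g x‖ₑ) ≤ C := by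
    refine h.le_of_forall hg.enorm fun F hF h1 => ?_
    have hFm : ∀ m : ℕ, Measurable fun x => min (F x) (m * w x) := fun m =>
      hF.min (hw.const_mul _)
    have hsup : ∀ x, F x = ⨆ m : ℕ, min (F x) (m * w x) := by
      intro x
      rw [← inf_iSup_eq, ← ENNReal.iSup_mul, ENNReal.iSup_natCast, ENNReal.top_mul (hw0 x).1]
      simp
    have hb : ∀ m : ℕ, ∫⁻ x, min (F x) (m * w x) * ‖g x‖ₑ ∂μ ≤ C := fun m =>
      hG m _ (hFm m) ((h.mono _ _ (ae_of_all _ fun x => min_le_left _ _)).trans h1)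
        fun x => min_le_right _ _
    have e : ∀ x, F x * ‖g x‖ₑ = ⨆ m : ℕ, min (F x) (m * w x) * ‖g x‖ₑ := by
      intro x
      rw [← ENNReal.iSup_mul, ← hsup]
    simp_rw [e]
    rw [lintegral_iSup (fun m => mulm (hFm m) hg.enorm)
      (fun i j hij x => by dsimp; gcongr)]
    exact iSup_le hb
  have hgf : ρ' (fun x => ‖g x‖ₑ) ≠ ∞ := (hgC.trans_lt hT.fin.lt_top).ne
  refine ⟨g, hg, hgf, fun f hf hff => ?_⟩
  have hSm : ∀ m : ℕ, MeasurableSet {x | ‖f x‖ₑ ≤ m * w x} := fun m =>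
    measurableSet_le hf.enorm (hw.const_mul _)
  set fm : ℕ → X → ℂ := fun m => {x | ‖f x‖ₑ ≤ m * w x}.indicator f with hfm
  have hfmm : ∀ m, Measurable (fm m) := fun m => hf.indicator (hSm m)
  have hfle : ∀ m x, ‖fm m x‖ₑ ≤ ‖f x‖ₑ := fun m x => by
    rw [hfm]; dsimp only
    by_cases hx : x ∈ {x | ‖f x‖ₑ ≤ m * w x}
    · rw [Set.indicator_of_mem hx]
    · rw [Set.indicator_of_notMem hx]; simp
  have hfev : ∀ x, ∀ᶠ m in atTop, fm m x = f x := by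
    intro x
    obtain ⟨N, hN⟩ := ENNReal.exists_nat_mul_gt (hw0 x).1 (b := ‖f x‖ₑ) (by simp)
    filter_upwards [eventually_ge_atTop N] with m hm
    rw [hfm]; dsimp only
    refine Set.indicator_of_mem (s := {x | ‖f x‖ₑ ≤ m * w x}) ?_ f
    refine hN.le.trans ?_
    gcongr
  have hfmf : ∀ m, ρ (fun x => ‖fm m x‖ₑ) ≠ ∞ := fun m =>
    ((h.mono _ _ (ae_of_all _ (hfle m))).trans_lt hff.lt_top).ne
  have t1 : Tendsto (fun m => T (fm m)) atTop (nhds (T f)) := by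
    rw [← tendsto_sub_nhds_zero_iff]
    refine Tendsto.congr (fun m => hT.sub (hfmm m) (hfmf m) hf hff) ?_
    refine hT.tend h _ (fun x => ‖f x‖ₑ) (fun m => (hfmm m).sub hf) hff ?_ (ae_of_all _ fun x => ?_)
    · intro m x
      rw [hfm, Pi.sub_apply]; dsimp only
      by_cases hx : x ∈ {x | ‖f x‖ₑ ≤ m * w x}
      · rw [Set.indicator_of_mem hx]; simp
      · rw [Set.indicator_of_notMem hx]; simp
    · refine tendsto_const_nhds.congr' ?_
      filter_upwards [hfev x] with m hm
      rw [Pi.sub_apply, hm, sub_self]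
  have t2 : Tendsto (fun m => ∫ x, fm m x * g x ∂μ) atTop
      (nhds (∫ x, f x * g x ∂μ)) := by
    have hi := h.dual_integrable hf hg hff hgf
    refine tendsto_integral_of_dominated_convergence (fun x => ‖f x * g x‖)
      (fun m => ((hfmm m).mul hg).aestronglyMeasurable) hi.norm
      (fun m => ae_of_all _ fun x => ?_) (ae_of_all _ fun x => ?_)
    · rw [norm_mul, norm_mul]
      gcongr
      have := hfle m x
      rwa [← ofReal_norm, ← ofReal_norm, ENNReal.ofReal_le_ofReal_iff (norm_nonneg _)] at this
    · refine tendsto_const_nhds.congr' ?_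
      filter_upwards [hfev x] with m hm
      rw [hm]
  refine tendsto_nhds_unique t1 (t2.congr fun m => ?_)
  refine (hB _ (hfmm m) m fun x => ?_).symm
  rw [hfm]; dsimp only
  by_cases hx : x ∈ {x | ‖f x‖ₑ ≤ m * w x}
  · rw [Set.indicator_of_mem hx]; exact hx
  · rw [Set.indicator_of_notMem hx]; simp

end TF

lemma BF.unique {X : Type} [MeasurableSpace X] {μ : Measure X} {ρ ρ' : (X → ℝ≥0∞) → ℝ≥0∞}
    (h : BF μ ρ ρ') {g g' : X → ℂ} (hg : Measurable g) (hg' : Measurable g')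
    (h1 : ρ' (fun x => ‖g x‖ₑ) ≠ ∞) (h2 : ρ' (fun x => ‖g' x‖ₑ) ≠ ∞)
    (H : ∀ f : X → ℂ, Measurable f → ρ (fun x => ‖f x‖ₑ) ≠ ∞ →
      ∫ x, f x * g' x ∂μ = ∫ x, f x * g x ∂μ) : g' =ᵐ[μ] g := by
  obtain ⟨w, hw, hw0, hw1⟩ := h.wt
  have hr0 : ∀ x, 0 < (w x).toReal := fun x => ENNReal.toReal_pos (hw0 x).1 (hw0 x).2
  set W : X → ℂ := fun x => ((w x).toReal : ℂ) with hWd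
  have hW0 : ∀ x, W x ≠ 0 := fun x => by
    simpa [hWd] using (hr0 x).ne'
  have hWe : ∀ x, ‖W x‖ₑ ≤ w x := fun x => toReal_enorm_le _
  have hW : Measurable W := Complex.measurable_ofReal.comp hw.ennreal_toReal
  have hW1 : ρ (fun x => ‖W x‖ₑ) ≤ 1 := (h.mono _ _ (ae_of_all _ hWe)).trans hw1
  have hWf : ρ (fun x => ‖W x‖ₑ) ≠ ∞ := (hW1.trans_lt one_lt_top).ne
  have key : (fun x => W x * g' x) =ᵐ[μ] fun x => W x * g x := by
    refine Integrable.ae_eq_of_forall_setIntegral_eq _ _ (h.dual_integrable hW hg' hWf h2)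
      (h.dual_integrable hW hg hWf h1) fun s hs _ => ?_
    have hle : ∀ x, ‖s.indicator W x‖ₑ ≤ ‖W x‖ₑ := fun x => by
      by_cases hx : x ∈ s <;> simp [hx]
    have h3 := H (s.indicator W) (hW.indicator hs)
      ((h.mono _ _ (ae_of_all _ hle)).trans_lt hWf.lt_top).ne
    rw [← integral_indicator hs, ← integral_indicator hs]
    convert h3 using 2
    · ext x; by_cases hx : x ∈ s <;> simp [hx]
    · ext x; by_cases hx : x ∈ s <;> simp [hx]
  filter_upwards [key] with x hx
  exact mul_left_cancel₀ (hW0 x) hx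


/-- duality of mixed-norm Herz spaces. -/
theorem mixedHerz_dual (n : ℕ) (α : Fin n → ℝ) (p q p' q' : Fin n → ℝ≥0∞)
    (hp : ∀ i, 1 ≤ p i ∧ p i ≠ ∞) (hq : ∀ i, 1 ≤ q i ∧ q i ≠ ∞)
    (hp' : ∀ i, 1 / p i + 1 / p' i = 1) (hq' : ∀ i, 1 / q i + 1 / q' i = 1) :
    (∀ g : (Fin n → ℝ) → ℂ, Measurable g → herzNormC n (-α) p' q' g ≠ ∞ →
      ∀ f : (Fin n → ℝ) → ℂ, Measurable f →
        (‖∫ x, f x * g x‖₊ : ℝ≥0∞) ≤ herzNormC n α p q f * herzNormC n (-α) p' q' g) ∧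
    (∀ T : ((Fin n → ℝ) → ℂ) → ℂ,
      (∀ f g : (Fin n → ℝ) → ℂ, Measurable f → herzNormC n α p q f ≠ ∞ →
        Measurable g → herzNormC n α p q g ≠ ∞ → T (f + g) = T f + T g) →
      (∀ (c : ℂ) (f : (Fin n → ℝ) → ℂ), Measurable f → herzNormC n α p q f ≠ ∞ →
        T (c • f) = c * T f) →
      (∃ C : ℝ≥0∞, C ≠ ∞ ∧ ∀ f : (Fin n → ℝ) → ℂ, Measurable f →
        herzNormC n α p q f ≠ ∞ → (‖T f‖₊ : ℝ≥0∞) ≤ C * herzNormC n α p q f) →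
      ∃ g : (Fin n → ℝ) → ℂ, Measurable g ∧ herzNormC n (-α) p' q' g ≠ ∞ ∧
        (∀ f : (Fin n → ℝ) → ℂ, Measurable f → herzNormC n α p q f ≠ ∞ →
          T f = ∫ x, f x * g x) ∧
        ∀ g' : (Fin n → ℝ) → ℂ, Measurable g' → herzNormC n (-α) p' q' g' ≠ ∞ →
          (∀ f : (Fin n → ℝ) → ℂ, Measurable f → herzNormC n α p q f ≠ ∞ →
            T f = ∫ x, f x * g' x) → g' =ᵐ[volume] g) ∧
    (∀ g : (Fin n → ℝ) → ℂ, Measurable g → herzNormC n (-α) p' q' g ≠ ∞ →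
      herzNormC n (-α) p' q' g =
        ⨆ (f : (Fin n → ℝ) → ℂ) (_ : Measurable f) (_ : herzNormC n α p q f ≤ 1),
          (‖∫ x, f x * g x‖₊ : ℝ≥0∞)) := by
  have h := BF_mixed n α p q p' q' hp hq hp' hq'
  refine ⟨fun g hg _ f hf => h.dual_bd hf hg, ?_, fun g hg hfin => h.dual_norm hg hfin⟩
  intro T hadd hsmul ⟨C, hC, hbd⟩
  have hT : TF (mixedHerzNormE n α p q) T C := ⟨hadd, hsmul, hC, hbd⟩
  obtain ⟨g, hg, hgf, hgT⟩ := hT.exists_dual h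
  refine ⟨g, hg, hgf, hgT, fun g' hg' hgf' H => ?_⟩
  exact h.unique hg hg' hgf hgf' fun f hf hff => (H f hf hff).symm.trans (hgT f hf hff)
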